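/- arXiv:1412.6803 — 2 statements merged into one kernel-verified Lean document; each statement's English description precedes it below -/
import Mathlib

section
/- Let G be a finite simple graph with maximum average degree mad(G) < 4 and maximum degree Δ(G) ≥ 7. Then χ_i(G) ≤ Δ(G) + 3. -/
open SimpleGraph

/-- An incidence coloring of `G` with `n` colors, where `φ v u` is the color of the
incidence `(v, vu)` (meaningful when `G.Adj v u`): two distinct adjacent incidences
`(v, vu)` and `(w, wx)` receive distinct colors. Incidences `(v, e)` and `(w, f)` are
adjacent if `v = w`, or `e = f`, or the edge `vw` equals `e` or `f`. -/
def IsIncidenceColoring {V : Type*} (G : SimpleGraph V) {n : ℕ} (φ : V → V → Fin n) : Prop :=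
  ∀ ⦃v u w x : V⦄, G.Adj v u → G.Adj w x → (v, u) ≠ (w, x) →
    (v = w ∨ s(v, u) = s(w, x) ∨ s(v, w) = s(v, u) ∨ s(v, w) = s(w, x)) →
    φ v u ≠ φ w x

/-- `G` admits an incidence `(n, ℓ)`-coloring: an incidence coloring with `n` colors such
that for every vertex `v`, at most `ℓ` distinct colors appear on the incidences of the
form `(u, uv)` where `u` ranges over the neighbors of `v`. -/
def HasIncidenceColoring {V : Type*} (G : SimpleGraph V) (n ℓ : ℕ) : Prop :=
  ∃ φ : V → V → Fin n, IsIncidenceColoring G φ ∧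
    ∀ v : V, ({c : Fin n | ∃ u : V, G.Adj u v ∧ φ u v = c}).ncard ≤ ℓ

/-- The incidence chromatic number: the least `n` such that `G` admits an incidence
`n`-coloring. -/
noncomputable def incChromaticNumber {V : Type*} (G : SimpleGraph V) : ℕ :=
  sInf {n : ℕ | ∃ φ : V → V → Fin n, IsIncidenceColoring G φ}

/-- `mad(G) < q`: every nonempty subgraph `H` of `G` satisfies `2|E(H)| < q·|V(H)|`. -/
def MadLT {V : Type*} (G : SimpleGraph V) (q : ℝ) : Prop :=
  ∀ H : G.Subgraph, H.verts.Nonempty →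
    (2 * H.edgeSet.ncard : ℝ) < q * H.verts.ncard

section IncidenceColoring

open scoped Classical
open Finset

/-- The finset of neighbors of `v` in `H`. -/
noncomputable def nbrs {V : Type*} [Fintype V] (H : SimpleGraph V) (v : V) : Finset V :=
  univ.filter (H.Adj v)

@[simp] lemma mem_nbrs {V : Type*} [Fintype V] {H : SimpleGraph V} {v u : V} :
    u ∈ nbrs H v ↔ H.Adj v u := by
  simp [nbrs]

/-- `c v u` is the color of the incidence `(v, vu)`, and `S v` is a palette of at most three
colors containing those of the incidences `(u, uv)` and avoiding those of the `(v, vu)`. -/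
structure IsPaletteColoring {V : Type*} {k : ℕ} (H : SimpleGraph V) (c : V → V → Fin k)
    (S : V → Finset (Fin k)) : Prop where
  card_le : ∀ v, #(S v) ≤ 3
  mem_head : ∀ ⦃v u⦄, H.Adj v u → c v u ∈ S u
  notMem_tail : ∀ ⦃v u⦄, H.Adj v u → c v u ∉ S v
  inj : ∀ ⦃v u w⦄, H.Adj v u → H.Adj v w → c v u = c v w → u = w

/-- `H` admits a palette coloring with `k` colors. -/
def PaletteColorable {V : Type*} (H : SimpleGraph V) (k : ℕ) : Prop :=
  ∃ (c : V → V → Fin k) (S : V → Finset (Fin k)), IsPaletteColoring H c S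

lemma IsPaletteColoring.isIncidenceColoring {V : Type*} {k : ℕ} {H : SimpleGraph V}
    {c : V → V → Fin k} {S : V → Finset (Fin k)} (h : IsPaletteColoring H c S) :
    IsIncidenceColoring H c := by
  intro v u w x hvu hwx hne hadj heq
  rcases hadj with rfl | he | he | he
  · exact hne (by rw [h.inj hvu hwx heq])
  · rcases Sym2.eq_iff.1 he with ⟨rfl, rfl⟩ | ⟨rfl, rfl⟩
    · exact hne rfl
    · exact h.notMem_tail hwx (heq ▸ h.mem_head hvu)
  · have hwu : u = w := by
      rcases Sym2.eq_iff.1 he with ⟨-, rfl⟩ | ⟨rfl, rfl⟩ <;> rfl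
    subst hwu
    exact h.notMem_tail hwx (heq ▸ h.mem_head hvu)
  · rcases Sym2.eq_iff.1 he with ⟨rfl, rfl⟩ | ⟨rfl, -⟩
    · exact hwx.ne rfl
    · exact h.notMem_tail hvu (heq ▸ h.mem_head hwx)

lemma exists_notMem_of_card_lt {k : ℕ} {A : Finset (Fin k)} (hA : #A < k) : ∃ a, a ∉ A := by
  obtain ⟨a, -, ha⟩ := exists_mem_notMem_of_card_lt_card (s := A) (t := univ) (by simpa using hA)
  exact ⟨a, ha⟩

lemma exists_notMem_union {k m n : ℕ} {A B : Finset (Fin k)} (hA : #A ≤ m) (hB : #B ≤ n)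
    (h : m + n < k) : ∃ a, a ∉ A ∧ a ∉ B := by
  obtain ⟨a, ha⟩ := exists_notMem_of_card_lt (A := A ∪ B)
    ((card_union_le _ _).trans_lt (by omega))
  exact ⟨a, by simpa using ha⟩

/-- The colors of the incidences `(v, vu)`. -/
noncomputable def outColors {V : Type*} [Fintype V] {k : ℕ} (H : SimpleGraph V)
    (c : V → V → Fin k) (v : V) : Finset (Fin k) :=
  (nbrs H v).image (c v)

section

variable {V : Type*} {k : ℕ} {G H : SimpleGraph V} {c : V → V → Fin k}
  {S : V → Finset (Fin k)}

/-- Recoloring the incidences `(w, wu)` by `g w` and replacing the palette of `u`. -/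
lemma IsPaletteColoring.recolor (h : IsPaletteColoring H c S) (u : V) (g : V → Fin k)
    (T : Finset (Fin k)) (hT : #T ≤ 3) (hmem : ∀ w, H.Adj w u → g w ∈ T)
    (hnot : ∀ w, H.Adj w u → g w ∉ S w)
    (hne : ∀ w z, H.Adj w u → H.Adj w z → z ≠ u → g w ≠ c w z)
    (hout : ∀ z, H.Adj u z → c u z ∉ T) :
    IsPaletteColoring H (fun x y => if y = u then g x else c x y) (Function.update S u T) where
  card_le v := by
    by_cases hv : v = u
    · subst hv; simpa using hT
    · simpa [Function.update_of_ne hv] using h.card_le v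
  mem_head v w hvw := by
    by_cases hw : w = u
    · subst hw; simpa using hmem v hvw
    · simpa [hw, Function.update_of_ne hw] using h.mem_head hvw
  notMem_tail v w hvw := by
    by_cases hw : w = u
    · subst hw; simpa [Function.update_of_ne hvw.ne] using hnot v hvw
    · by_cases hv : v = u
      · subst hv; simpa [hw] using hout w hvw
      · simpa [hw, Function.update_of_ne hv] using h.notMem_tail hvw
  inj v w z hvw hvz heq := by
    by_cases hw : w = u
    · by_cases hz : z = u
      · rw [hw, hz]
      · subst hw
        simp only [if_true, hz, if_false] at heq
        exact absurd heq (hne v z hvw hvz hz)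
    · by_cases hz : z = u
      · subst hz
        simp only [if_true, hw, if_false] at heq
        exact absurd heq.symm (hne v w hvz hvw hw)
      · simp only [hw, hz, if_false] at heq
        exact h.inj hvw hvz heq

variable [Fintype V]

@[simp] lemma mem_outColors {v : V} {a : Fin k} :
    a ∈ outColors H c v ↔ ∃ u, H.Adj v u ∧ c v u = a := by
  simp [outColors]

lemma card_outColors_le (v : V) : #(outColors H c v) ≤ #(nbrs H v) := card_image_le

lemma card_nbrs_mono (h : H ≤ G) (v : V) : #(nbrs H v) ≤ #(nbrs G v) :=
  card_le_card fun u hu => by simpa using h (by simpa using hu)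

lemma card_nbrs_deleteIncidenceSet_lt {u v : V} (h : G.Adj v u) :
    #(nbrs (G.deleteIncidenceSet v) u) < #(nbrs G u) := by
  refine card_lt_card ⟨fun w hw => ?_, fun hsub => ?_⟩
  · simp only [mem_nbrs, deleteIncidenceSet_adj] at hw ⊢
    exact hw.1
  · have := hsub (mem_nbrs.2 h.symm)
    simp [deleteIncidenceSet_adj] at this

lemma PaletteColorable.exists_card_eq (h : PaletteColorable H k)
    (hdeg : ∀ v, #(nbrs H v) + 3 ≤ k) :
    ∃ (c : V → V → Fin k) (S : V → Finset (Fin k)),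
      IsPaletteColoring H c S ∧ ∀ v, #(S v) = 3 := by
  obtain ⟨c, S, hS⟩ := h
  have key : ∀ v, ∃ T, S v ⊆ T ∧ T ⊆ (outColors H c v)ᶜ ∧ #T = 3 := by
    intro v
    refine exists_subsuperset_card_eq ?_ (hS.card_le v) ?_
    · intro a ha
      simp only [mem_compl, mem_outColors, not_exists, not_and]
      rintro u hu rfl
      exact hS.notMem_tail hu ha
    · have h1 := card_outColors_le (H := H) (c := c) v
      have h2 := hdeg v
      rw [card_compl, Fintype.card_fin]
      omega
  choose T hT1 hT2 hT3 using key
  refine ⟨c, T, ⟨fun v => (hT3 v).le, fun v u hvu => hT1 _ (hS.mem_head hvu),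
    fun v u hvu hc => ?_, hS.inj⟩, hT3⟩
  have := hT2 v hc
  simp only [mem_compl, mem_outColors, not_exists, not_and] at this
  exact this u hvu rfl

/-- Extending a palette coloring of `G` minus the edges at `v` to `G`: the incidence `(u, uv)`
gets color `a u` and `(v, vu)` gets color `x u`. -/
lemma IsPaletteColoring.attach {v : V} (h : IsPaletteColoring (G.deleteIncidenceSet v) c S)
    (hv : #(nbrs G v) ≤ 3) (a x : V → Fin k)
    (ha : ∀ u, G.Adj v u → a u ∉ S u)
    (ha' : ∀ u, G.Adj v u → a u ∉ outColors (G.deleteIncidenceSet v) c u)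
    (hx : ∀ u, G.Adj v u → x u ∈ S u)
    (hinj : ∀ u w, G.Adj v u → G.Adj v w → x u = x w → u = w)
    (hxa : ∀ u w, G.Adj v u → G.Adj v w → x u ≠ a w) :
    PaletteColorable G k := by
  refine ⟨fun y z => if y = v then x z else if z = v then a y else c y z,
    Function.update S v ((nbrs G v).image a), ?_, ?_, ?_, ?_⟩
  · intro y
    by_cases hy : y = v
    · subst hy; simpa using card_image_le.trans hv
    · simpa [Function.update_of_ne hy] using h.card_le y
  · intro y z hyz
    by_cases hy : y = v
    · subst hy; simpa [Function.update_of_ne hyz.ne'] using hx z hyz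
    · by_cases hz : z = v
      · subst hz; simpa [hy] using ⟨y, hyz.symm, rfl⟩
      · simpa [hy, hz, Function.update_of_ne hz] using
          h.mem_head (deleteIncidenceSet_adj.2 ⟨hyz, hy, hz⟩)
  · intro y z hyz
    by_cases hy : y = v
    · subst hy
      simpa using fun w hw => (hxa z w hyz hw).symm
    · by_cases hz : z = v
      · subst hz; simpa [hy, Function.update_of_ne hy] using ha y hyz.symm
      · simpa [hy, hz, Function.update_of_ne hy] using
          h.notMem_tail (deleteIncidenceSet_adj.2 ⟨hyz, hy, hz⟩)
  · intro y z w hyz hyw heq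
    by_cases hy : y = v
    · subst hy; exact hinj z w hyz hyw (by simpa using heq)
    · have key : ∀ w, G.Adj y w → w ≠ v → G.Adj y v → a y ≠ c y w := fun w hw hwv hyv he =>
        ha' y hyv.symm (mem_outColors.2 ⟨w, deleteIncidenceSet_adj.2 ⟨hw, hy, hwv⟩, he.symm⟩)
      by_cases hz : z = v
      · by_cases hw : w = v
        · rw [hz, hw]
        · subst hz
          simp only [hy, hw, if_true, if_false] at heq
          exact absurd heq (key w hyw hw hyz)
      · by_cases hw : w = v
        · subst hw
          simp only [hy, hz, if_true, if_false] at heq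
          exact absurd heq.symm (key z hyz hz hyw)
        · simp only [hy, hz, hw, if_false] at heq
          exact h.inj (deleteIncidenceSet_adj.2 ⟨hyz, hy, hz⟩)
            (deleteIncidenceSet_adj.2 ⟨hyw, hy, hw⟩) heq

end

lemma exists_distinct_of_card {k : ℕ} {A B C : Finset (Fin k)} (hA : 1 ≤ #A) (hB : 2 ≤ #B)
    (hC : 2 ≤ #C) (h : B ≠ C ∨ 3 ≤ #B ∨ ¬ A ⊆ B) :
    ∃ x ∈ A, ∃ y ∈ B, ∃ z ∈ C, x ≠ y ∧ x ≠ z ∧ y ≠ z := by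
  have pick : ∀ (D : Finset (Fin k)) (p : Fin k), 2 ≤ #D → ∃ q ∈ D, q ≠ p := fun D p hD =>
    exists_mem_ne (by omega) p
  have pick' : ∀ (D : Finset (Fin k)) (p q : Fin k), 3 ≤ #D → ∃ r ∈ D, r ≠ p ∧ r ≠ q := by
    intro D p q hD
    obtain ⟨r, hr, hr'⟩ := exists_mem_notMem_of_card_lt_card (s := {p, q}) (t := D)
      (lt_of_le_of_lt card_le_two (by omega))
    exact ⟨r, hr, by simpa using hr'⟩
  by_cases hAB : A ⊆ B
  swap
  · obtain ⟨x, hx, hxB⟩ := not_subset.1 hAB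
    obtain ⟨z, hz, hzx⟩ := pick C x hC
    obtain ⟨y, hy, hyz⟩ := pick B z hB
    exact ⟨x, hx, y, hy, z, hz, fun e => hxB (e ▸ hy), hzx.symm, hyz⟩
  obtain ⟨x, hx⟩ := card_pos.1 hA
  by_cases hB3 : 3 ≤ #B
  · obtain ⟨z, hz, hzx⟩ := pick C x hC
    obtain ⟨y, hy, hyx, hyz⟩ := pick' B x z hB3
    exact ⟨x, hx, y, hy, z, hz, hyx.symm, hzx.symm, hyz⟩
  have hBC : ¬ C ⊆ B := fun hCB => by
    rcases h with h | h | h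
    · exact h (eq_of_subset_of_card_le hCB (by omega)).symm
    · exact hB3 h
    · exact h hAB
  obtain ⟨z, hz, hzB⟩ := not_subset.1 hBC
  obtain ⟨y, hy, hyx⟩ := pick B x hB
  exact ⟨x, hx, y, hy, z, hz, hyx.symm, fun e => hzB (e ▸ hAB hx), fun e => hzB (e ▸ hy)⟩

lemma exists_ne_of_card {k : ℕ} {B C : Finset (Fin k)} (hB : 1 ≤ #B) (hC : 2 ≤ #C) :
    ∃ y ∈ B, ∃ z ∈ C, y ≠ z := by
  obtain ⟨y, hy⟩ := card_pos.1 hB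
  obtain ⟨z, hz, hzy⟩ := exists_mem_ne (show 1 < #C by omega) y
  exact ⟨y, hy, z, hz, hzy.symm⟩

lemma card_sub_one_le_card_erase {k : ℕ} (A : Finset (Fin k)) (a : Fin k) :
    #A - 1 ≤ #(A.erase a) := pred_card_le_card_erase

section

variable {V : Type*} [Fintype V] {k : ℕ} {G : SimpleGraph V}

lemma nbrs_eq_pair_or {v : V} (h : #(nbrs G v) ≤ 2) :
    nbrs G v = ∅ ∨ (∃ u, nbrs G v = {u}) ∨ ∃ u w, u ≠ w ∧ nbrs G v = {u, w} := by
  have : #(nbrs G v) = 0 ∨ #(nbrs G v) = 1 ∨ #(nbrs G v) = 2 := by omega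
  simpa only [card_eq_zero, card_eq_one, card_eq_two] using this

lemma PaletteColorable.of_card_nbrs_le_two {v : V}
    (h : PaletteColorable (G.deleteIncidenceSet v) k) (hdeg : ∀ u, #(nbrs G u) + 3 ≤ k)
    (hv : #(nbrs G v) ≤ 2) : PaletteColorable G k := by
  obtain ⟨c, S, hS, hcard⟩ := h.exists_card_eq fun u =>
    (Nat.add_le_add_right (card_nbrs_mono (deleteIncidenceSet_le G v) u) 3).trans (hdeg u)
  have hfree : ∀ u, ∃ a, G.Adj v u →
      a ∉ S u ∧ a ∉ outColors (G.deleteIncidenceSet v) c u := by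
    intro u
    by_cases huv : G.Adj v u
    · have h1 := card_nbrs_deleteIncidenceSet_lt huv
      obtain ⟨a, ha⟩ := exists_notMem_union (hcard u).le
        (card_outColors_le (H := G.deleteIncidenceSet v) (c := c) u)
        (by have := hdeg u; omega)
      exact ⟨a, fun _ => ha⟩
    · exact ⟨⟨0, by have := hdeg v; omega⟩, fun h => absurd h huv⟩
  choose a ha using hfree
  rcases nbrs_eq_pair_or hv with hN | ⟨u, hN⟩ | ⟨u, w, huw, hN⟩
  · have hno : ∀ u, ¬ G.Adj v u := fun u hu => by
      have := mem_nbrs.2 hu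
      simp [hN] at this
    exact hS.attach (by omega) a a (fun u hu => absurd hu (hno u))
      (fun u hu => absurd hu (hno u)) (fun u hu => absurd hu (hno u))
      (fun u _ hu => absurd hu (hno u)) (fun u _ hu => absurd hu (hno u))
  · have hadj : ∀ y, G.Adj v y ↔ y = u := fun y => by rw [← mem_nbrs, hN, mem_singleton]
    obtain ⟨x, hx⟩ := card_pos.1 (show 0 < #(S u) by rw [hcard]; omega)
    refine hS.attach (by omega) a (fun _ => x) (fun y hy => (ha y hy).1) (fun y hy => (ha y hy).2)
      ?_ ?_ ?_
    · intro y hy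
      rwa [(hadj y).1 hy]
    · intro y z hy hz _
      rw [(hadj y).1 hy, (hadj z).1 hz]
    · intro y z _ hz he
      exact (ha z hz).1 (by rw [← he, (hadj z).1 hz]; exact hx)
  · have hadj : ∀ y, G.Adj v y ↔ y = u ∨ y = w := fun y => by
      rw [← mem_nbrs, hN, mem_insert, mem_singleton]
    have hu := (hadj u).2 (Or.inl rfl)
    have hw := (hadj w).2 (Or.inr rfl)
    have h1 := card_sub_one_le_card_erase (S u) (a w)
    have h2 := card_sub_one_le_card_erase (S w) (a u)
    have h3 := hcard u
    have h4 := hcard w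
    obtain ⟨x, hx, y, hy, hxy⟩ := exists_ne_of_card (B := (S u).erase (a w))
      (C := (S w).erase (a u)) (by omega) (by omega)
    simp only [mem_erase] at hx hy
    refine hS.attach (by omega) a (fun z => if z = u then x else y) (fun y hy => (ha y hy).1)
      (fun y hy => (ha y hy).2) ?_ ?_ ?_
    · intro z hz
      rcases (hadj z).1 hz with rfl | rfl
      · simpa using hx.2
      · simpa [huw.symm] using hy.2
    · intro p q hp hq
      rcases (hadj p).1 hp with rfl | rfl <;> rcases (hadj q).1 hq with rfl | rfl <;>
        simp [huw.symm, hxy, hxy.symm]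
    · intro p q hp hq
      rcases (hadj p).1 hp with rfl | rfl <;> rcases (hadj q).1 hq with rfl | rfl <;>
        simp only [if_true, huw.symm, if_false]
      · exact fun e => (ha _ hu).1 (e ▸ hx.2)
      · exact hx.1
      · exact hy.1
      · exact fun e => (ha _ hw).1 (e ▸ hy.2)

variable {c : V → V → Fin k} {S : V → Finset (Fin k)} {v u₁ u₂ u₃ : V}

/-- Extension to a vertex `v` with neighbors `u₁`, `u₂`, `u₃` where only the color of
`(u₁, u₁v)` remains to be chosen. -/
lemma IsPaletteColoring.attach_three (h : IsPaletteColoring (G.deleteIncidenceSet v) c S)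
    (hN : nbrs G v = {u₁, u₂, u₃}) (h12 : u₁ ≠ u₂) (h13 : u₁ ≠ u₃) (h23 : u₂ ≠ u₃)
    (hk : #(nbrs (G.deleteIncidenceSet v) u₁) + #(S u₁) + 2 < k) {a₂ a₃ x₁ x₂ x₃ : Fin k}
    (ha2 : a₂ ∉ S u₂) (ha2' : a₂ ∉ outColors (G.deleteIncidenceSet v) c u₂)
    (ha3 : a₃ ∉ S u₃) (ha3' : a₃ ∉ outColors (G.deleteIncidenceSet v) c u₃)
    (hx1 : x₁ ∈ ((S u₁).erase a₂).erase a₃) (hx2 : x₂ ∈ (S u₂).erase a₃)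
    (hx3 : x₃ ∈ (S u₃).erase a₂) (hx12 : x₁ ≠ x₂) (hx13 : x₁ ≠ x₃) (hx23 : x₂ ≠ x₃) :
    PaletteColorable G k := by
  simp only [mem_erase] at hx1 hx2 hx3
  obtain ⟨a₁, ha1, ha1'⟩ := exists_notMem_union
    (card_outColors_le (H := G.deleteIncidenceSet v) (c := c) u₁)
    (card_union_le (S u₁) {x₂, x₃})
    (lt_of_le_of_lt (by have := card_le_two (a := x₂) (b := x₃); omega) hk)
  simp only [mem_union, mem_insert, mem_singleton, not_or] at ha1'
  have hadj : ∀ y, G.Adj v y ↔ y = u₁ ∨ y = u₂ ∨ y = u₃ := fun y => by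
    rw [← mem_nbrs, hN, mem_insert, mem_insert, mem_singleton]
  have n2 : x₂ ≠ a₂ := fun e => ha2 (e ▸ hx2.2)
  have n3 : x₃ ≠ a₃ := fun e => ha3 (e ▸ hx3.2)
  have n1 : x₁ ≠ a₁ := fun e => ha1'.1 (e ▸ hx1.2.2)
  refine h.attach (by rw [hN]; exact card_le_three)
    (fun z => if z = u₁ then a₁ else if z = u₂ then a₂ else a₃)
    (fun z => if z = u₁ then x₁ else if z = u₂ then x₂ else x₃) ?_ ?_ ?_ ?_ ?_
  · intro z hz
    rcases (hadj z).1 hz with rfl | rfl | rfl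
    · simpa using ha1'.1
    · simpa [h12.symm] using ha2
    · simpa [h13.symm, h23.symm] using ha3
  · intro z hz
    rcases (hadj z).1 hz with rfl | rfl | rfl
    · simpa only [if_true] using ha1
    · simpa only [if_true, h12.symm, if_false] using ha2'
    · simpa only [if_true, h13.symm, h23.symm, if_false] using ha3'
  · intro z hz
    rcases (hadj z).1 hz with rfl | rfl | rfl
    · simpa using hx1.2.2
    · simpa [h12.symm] using hx2.2
    · simpa [h13.symm, h23.symm] using hx3.2
  · intro p q hp hq
    rcases (hadj p).1 hp with rfl | rfl | rfl <;> rcases (hadj q).1 hq with rfl | rfl | rfl <;>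
      simp [h12.symm, h13.symm, h23.symm, hx12, hx12.symm, hx13, hx13.symm, hx23, hx23.symm]
  · intro p q hp hq
    rcases (hadj p).1 hp with rfl | rfl | rfl <;> rcases (hadj q).1 hq with rfl | rfl | rfl <;>
      simp only [if_true, h12.symm, h13.symm, h23.symm, if_false]
    exacts [n1, hx1.2.1, hx1.1, Ne.symm ha1'.2.1, n2, hx2.1, Ne.symm ha1'.2.2, hx3.1, n3]

end

section

variable {V : Type*} [Fintype V] {k : ℕ} {G : SimpleGraph V} {c : V → V → Fin k}
  {S : V → Finset (Fin k)} {v u₁ u₂ u₃ : V}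

/-- Extension to a vertex of degree three one of whose neighbors has a palette with at most two
colors. -/
lemma IsPaletteColoring.attach_three_of_card_le_two
    (h : IsPaletteColoring (G.deleteIncidenceSet v) c S)
    (hN : nbrs G v = {u₁, u₂, u₃}) (h12 : u₁ ≠ u₂) (h13 : u₁ ≠ u₃) (h23 : u₂ ≠ u₃)
    (hk : 10 ≤ k) (hdeg : #(nbrs (G.deleteIncidenceSet v) u₁) ≤ 4) (hS1 : #(S u₁) ≤ 2)
    (hS2 : #(S u₂) = 3) (hS3 : #(S u₃) = 3) {a₂ a₃ : Fin k}
    (ha2 : a₂ ∉ S u₂) (ha2' : a₂ ∉ outColors (G.deleteIncidenceSet v) c u₂)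
    (ha3 : a₃ ∉ S u₃) (ha3' : a₃ ∉ outColors (G.deleteIncidenceSet v) c u₃) :
    PaletteColorable G k := by
  have e2 := card_sub_one_le_card_erase (S u₂) a₃
  have e3 := card_sub_one_le_card_erase (S u₃) a₂
  obtain ⟨x₂, hx2, x₃, hx3, hx23⟩ := exists_ne_of_card (B := (S u₂).erase a₃)
    (C := (S u₃).erase a₂) (by omega) (by omega)
  obtain ⟨x₁, hx1, hx1'⟩ := exists_notMem_union
    (card_outColors_le (H := G.deleteIncidenceSet v) (c := c) u₁)
    (card_le_four (a := a₂) (b := a₃) (c := x₂) (d := x₃)) (by omega)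
  simp only [mem_insert, mem_singleton, not_or] at hx1'
  have hins : #(insert x₁ (S u₁)) ≤ 3 := (card_insert_le _ _).trans (by omega)
  have h' := h.recolor u₁ (fun w => c w u₁) (insert x₁ (S u₁)) hins
    (fun w hw => mem_insert_of_mem (h.mem_head hw)) (fun w hw => h.notMem_tail hw)
    (fun w z hw hz hne heq => hne (h.inj hw hz heq).symm)
    (fun z hz => by
      simp only [mem_insert, not_or]
      exact ⟨fun e => hx1 (mem_outColors.2 ⟨z, hz, e⟩), h.notMem_tail hz⟩)
  have hc : (fun x y => if y = u₁ then c x u₁ else c x y) = c := by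
    funext x y
    split_ifs with hy
    · rw [hy]
    · rfl
  rw [hc] at h'
  refine h'.attach_three hN h12 h13 h23 (by rw [Function.update_self]; omega)
    (a₂ := a₂) (a₃ := a₃) (x₁ := x₁) (x₂ := x₂) (x₃ := x₃) ?_ ha2' ?_ ha3' ?_ ?_ ?_
    hx1'.2.2.1 hx1'.2.2.2 hx23
  · rwa [Function.update_of_ne h12.symm]
  · rwa [Function.update_of_ne h13.symm]
  · simp [hx1'.1, hx1'.2.1]
  · rwa [Function.update_of_ne h12.symm]
  · rwa [Function.update_of_ne h13.symm]

lemma exists_notMem_palette_outColors (hdeg : ∀ u, #(nbrs G u) + 3 ≤ k)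
    (hcard : ∀ u, #(S u) = 3) {u : V} (hu : G.Adj v u) :
    ∃ a, a ∉ S u ∧ a ∉ outColors (G.deleteIncidenceSet v) c u := by
  have h1 := card_nbrs_deleteIncidenceSet_lt hu
  exact exists_notMem_union (hcard u).le
    (card_outColors_le (H := G.deleteIncidenceSet v) (c := c) u)
    (by have := hdeg u; omega)

/-- A vertex of degree three with a neighbor of degree at most five and another one of degree at
most six is reducible. -/
lemma PaletteColorable.of_five_six (h : PaletteColorable (G.deleteIncidenceSet v) k)
    (hdeg : ∀ u, #(nbrs G u) + 3 ≤ k) (hk : 10 ≤ k)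
    (hN : nbrs G v = {u₁, u₂, u₃}) (h12 : u₁ ≠ u₂) (h13 : u₁ ≠ u₃) (h23 : u₂ ≠ u₃)
    (hu1 : #(nbrs G u₁) ≤ 5) (hu2 : #(nbrs G u₂) ≤ 6) : PaletteColorable G k := by
  obtain ⟨c, S, hS, hcard⟩ := h.exists_card_eq fun u =>
    (Nat.add_le_add_right (card_nbrs_mono (deleteIncidenceSet_le G v) u) 3).trans (hdeg u)
  have hadj1 : G.Adj v u₁ := by rw [← mem_nbrs, hN]; simp
  have hadj2 : G.Adj v u₂ := by rw [← mem_nbrs, hN]; simp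
  have hadj3 : G.Adj v u₃ := by rw [← mem_nbrs, hN]; simp
  have d1 := card_nbrs_deleteIncidenceSet_lt hadj1
  have d2 := card_nbrs_deleteIncidenceSet_lt hadj2
  have c1 := hcard u₁
  have c2 := hcard u₂
  have c3 := hcard u₃
  obtain ⟨a₃, ha3, ha3'⟩ := exists_notMem_palette_outColors (c := c) hdeg hcard hadj3
  have hout := card_outColors_le (H := G.deleteIncidenceSet v) (c := c) u₂
  suffices hsuff : ∃ a₂, a₂ ∉ S u₂ ∧ a₂ ∉ outColors (G.deleteIncidenceSet v) c u₂ ∧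
      ((S u₂).erase a₃ ≠ (S u₃).erase a₂ ∨ 3 ≤ #((S u₂).erase a₃)) by
    obtain ⟨a₂, ha2, ha2', hne⟩ := hsuff
    have e1 := card_sub_one_le_card_erase (S u₁) a₂
    have e1' := card_sub_one_le_card_erase ((S u₁).erase a₂) a₃
    have e2 := card_sub_one_le_card_erase (S u₂) a₃
    have e3 := card_sub_one_le_card_erase (S u₃) a₂
    obtain ⟨x₁, hx1, x₂, hx2, x₃, hx3, hx12, hx13, hx23⟩ := exists_distinct_of_card
      (A := ((S u₁).erase a₂).erase a₃) (B := (S u₂).erase a₃) (C := (S u₃).erase a₂)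
      (by omega) (by omega) (by omega) (hne.imp_right Or.inl)
    exact hS.attach_three hN h12 h13 h23 (by omega) ha2 ha2' ha3 ha3' hx1 hx2 hx3 hx12 hx13 hx23
  obtain ⟨a, ha, ha'⟩ := exists_notMem_union c2.le hout (by omega)
  by_cases haS : a ∈ S u₃
  · obtain ⟨b, hb, hb'⟩ := exists_notMem_union
      ((card_insert_le a (S u₂)).trans (Nat.add_le_add_right c2.le 1)) hout (by omega)
    simp only [mem_insert, not_or] at hb
    refine ⟨b, hb.2, hb', Or.inl fun e => ha ?_⟩
    have : a ∈ (S u₃).erase b := mem_erase.2 ⟨Ne.symm hb.1, haS⟩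
    rw [← e] at this
    exact mem_of_mem_erase this
  · refine ⟨a, ha, ha', ?_⟩
    rw [erase_eq_of_notMem haS]
    by_cases e : (S u₂).erase a₃ = S u₃
    · exact Or.inr (by rw [e, c3])
    · exact Or.inl e

/-- Two adjacent vertices of degree at most three form a reducible configuration. -/
lemma PaletteColorable.of_three_three (h : PaletteColorable (G.deleteIncidenceSet v) k)
    (hdeg : ∀ u, #(nbrs G u) + 3 ≤ k) (hk : 10 ≤ k)
    (hN : nbrs G v = {u₁, u₂, u₃}) (h12 : u₁ ≠ u₂) (h13 : u₁ ≠ u₃) (h23 : u₂ ≠ u₃)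
    (hu1 : #(nbrs G u₁) ≤ 3) : PaletteColorable G k := by
  obtain ⟨c, S, hS, hcard⟩ := h.exists_card_eq fun u =>
    (Nat.add_le_add_right (card_nbrs_mono (deleteIncidenceSet_le G v) u) 3).trans (hdeg u)
  have hadj1 : G.Adj v u₁ := by rw [← mem_nbrs, hN]; simp
  have hadj2 : G.Adj v u₂ := by rw [← mem_nbrs, hN]; simp
  have hadj3 : G.Adj v u₃ := by rw [← mem_nbrs, hN]; simp
  have d1 := card_nbrs_deleteIncidenceSet_lt hadj1
  obtain ⟨a₂, ha2, ha2'⟩ := exists_notMem_palette_outColors (c := c) hdeg hcard hadj2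
  obtain ⟨a₃, ha3, ha3'⟩ := exists_notMem_palette_outColors (c := c) hdeg hcard hadj3
  have hT : #((nbrs (G.deleteIncidenceSet v) u₁).image (fun w => c w u₁)) ≤ 2 :=
    card_image_le.trans (by omega)
  have h' := hS.recolor u₁ (fun w => c w u₁)
    ((nbrs (G.deleteIncidenceSet v) u₁).image (fun w => c w u₁)) (by omega)
    (fun w hw => mem_image_of_mem _ (mem_nbrs.2 hw.symm)) (fun w hw => hS.notMem_tail hw)
    (fun w z hw hz hne heq => hne (hS.inj hw hz heq).symm)
    (fun z hz hmem => by
      obtain ⟨w, hw, he⟩ := mem_image.1 hmem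
      exact hS.notMem_tail hz (he ▸ hS.mem_head (mem_nbrs.1 hw).symm))
  have hc : (fun x y => if y = u₁ then c x u₁ else c x y) = c := by
    funext x y
    split_ifs with hy
    · rw [hy]
    · rfl
  rw [hc] at h'
  refine h'.attach_three_of_card_le_two hN h12 h13 h23 hk (by omega) (by simpa using hT)
    (a₂ := a₂) (a₃ := a₃) ?_ ?_ ?_ ha2' ?_ ha3'
  all_goals first | rw [Function.update_of_ne h12.symm] | rw [Function.update_of_ne h13.symm]
  exacts [hcard _, hcard _, ha2, ha3]

/-- A vertex `v` of degree three with a neighbor `u₁` of degree at most four that has two further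
neighbors `w₀`, `w₁` of degree at most four is reducible. -/
lemma PaletteColorable.of_four (h : PaletteColorable (G.deleteIncidenceSet v) k)
    (hdeg : ∀ u, #(nbrs G u) + 3 ≤ k) (hk : 10 ≤ k)
    (hN : nbrs G v = {u₁, u₂, u₃}) (h12 : u₁ ≠ u₂) (h13 : u₁ ≠ u₃) (h23 : u₂ ≠ u₃)
    (hu1 : #(nbrs G u₁) ≤ 4) (hu2 : 5 ≤ #(nbrs G u₂)) (hu3 : 5 ≤ #(nbrs G u₃)) {w₀ w₁ : V}
    (hw : w₀ ≠ w₁) (hw0v : w₀ ≠ v) (hw1v : w₁ ≠ v) (hw0 : G.Adj u₁ w₀) (hw1 : G.Adj u₁ w₁)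
    (hdw0 : #(nbrs G w₀) ≤ 4) (hdw1 : #(nbrs G w₁) ≤ 4) : PaletteColorable G k := by
  obtain ⟨c, S, hS, hcard⟩ := h.exists_card_eq fun u =>
    (Nat.add_le_add_right (card_nbrs_mono (deleteIncidenceSet_le G v) u) 3).trans (hdeg u)
  have hadj1 : G.Adj v u₁ := by rw [← mem_nbrs, hN]; simp
  have hadj2 : G.Adj v u₂ := by rw [← mem_nbrs, hN]; simp
  have hadj3 : G.Adj v u₃ := by rw [← mem_nbrs, hN]; simp
  have d1 := card_nbrs_deleteIncidenceSet_lt hadj1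
  have hmono := card_nbrs_mono (deleteIncidenceSet_le G v)
  have c1 := hcard u₁
  have c2 := hcard u₂
  have c3 := hcard u₃
  obtain ⟨a₂, ha2, ha2'⟩ := exists_notMem_palette_outColors (c := c) hdeg hcard hadj2
  obtain ⟨a₃, ha3, ha3'⟩ := exists_notMem_palette_outColors (c := c) hdeg hcard hadj3
  have hu2w : ∀ w, #(nbrs G w) ≤ 4 → u₂ ≠ w := by rintro w hw rfl; omega
  have hu3w : ∀ w, #(nbrs G w) ≤ 4 → u₃ ≠ w := by rintro w hw rfl; omega
  set D := G.deleteIncidenceSet v with hD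
  have hDw : ∀ w, w ≠ v → G.Adj u₁ w → D.Adj u₁ w := fun w hwv hw =>
    deleteIncidenceSet_adj.2 ⟨hw, hadj1.ne', hwv⟩
  have e2 := card_sub_one_le_card_erase (S u₂) a₃
  have e3 := card_sub_one_le_card_erase (S u₃) a₂
  by_cases hgood : (S u₂).erase a₃ ≠ (S u₃).erase a₂ ∨ 3 ≤ #((S u₂).erase a₃)
  · have e1 := card_sub_one_le_card_erase (S u₁) a₂
    have e1' := card_sub_one_le_card_erase ((S u₁).erase a₂) a₃
    obtain ⟨x₁, hx1, x₂, hx2, x₃, hx3, hx12, hx13, hx23⟩ := exists_distinct_of_card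
      (A := ((S u₁).erase a₂).erase a₃) (B := (S u₂).erase a₃) (C := (S u₃).erase a₂)
      (by omega) (by omega) (by omega) (hgood.imp_right Or.inl)
    exact hS.attach_three hN h12 h13 h23 (by rw [← hD]; omega) ha2 ha2' ha3 ha3' hx1 hx2 hx3 hx12 hx13 hx23
  push Not at hgood
  set Q := insert a₂ (insert a₃ ((S u₂).erase a₃)) with hQ
  have hQcard : #Q ≤ 4 := by
    have := card_insert_le a₂ (insert a₃ ((S u₂).erase a₃))
    have := card_insert_le a₃ ((S u₂).erase a₃)
    rw [hQ]
    omega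
  have key : ∀ g : V → Fin k, g u₂ = c u₂ u₁ → g u₃ = c u₃ u₁ →
      (∀ w, D.Adj w u₁ → g w ∉ S w ∧ (∀ z, D.Adj w z → z ≠ u₁ → g w ≠ c w z) ∧
        ∀ z, D.Adj u₁ z → c u₁ z ≠ g w) →
      (#((nbrs D u₁).image g) ≤ 2 ∨ ∃ t ∈ (nbrs D u₁).image g, t ∉ Q) →
      PaletteColorable G k := by
    intro g hg2 hg3 hg hT
    have hT3 : #((nbrs D u₁).image g) ≤ 3 := card_image_le.trans (by omega)
    have h' := hS.recolor u₁ g ((nbrs D u₁).image g) hT3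
      (fun w hw => mem_image_of_mem _ (mem_nbrs.2 hw.symm)) (fun w hw => (hg w hw).1)
      (fun w z hw => (hg w hw).2.1 z)
      (fun z hz hmem => by
        obtain ⟨w, hw, he⟩ := mem_image.1 hmem
        exact (hg w (mem_nbrs.1 hw).symm).2.2 z hz he.symm)
    have hrow : ∀ u, g u = c u u₁ → (fun y => if y = u₁ then g u else c u y) = c u := by
      intro u hu
      funext y
      split_ifs with hy
      · rw [hy, hu]
      · rfl
    have hS2 : Function.update S u₁ ((nbrs D u₁).image g) u₂ = S u₂ :=
      Function.update_of_ne h12.symm _ _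
    have hS3 : Function.update S u₁ ((nbrs D u₁).image g) u₃ = S u₃ :=
      Function.update_of_ne h13.symm _ _
    have hS1 : Function.update S u₁ ((nbrs D u₁).image g) u₁ = (nbrs D u₁).image g :=
      Function.update_self _ _ _
    have ho2 : a₂ ∉ outColors D (fun x y => if y = u₁ then g x else c x y) u₂ := by
      rwa [outColors, hrow u₂ hg2]
    have ho3 : a₃ ∉ outColors D (fun x y => if y = u₁ then g x else c x y) u₃ := by
      rwa [outColors, hrow u₃ hg3]
    rcases hT with hT | ⟨t, ht, htQ⟩
    · exact h'.attach_three_of_card_le_two hN h12 h13 h23 hk (by rw [← hD]; omega) (by rwa [hS1])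
        (by rwa [hS2]) (by rwa [hS3]) (by rwa [hS2]) ho2 (by rwa [hS3]) ho3
    · simp only [hQ, mem_insert, not_or] at htQ
      have htA : t ∈ (((nbrs D u₁).image g).erase a₂).erase a₃ :=
        mem_erase.2 ⟨htQ.2.1, mem_erase.2 ⟨htQ.1, ht⟩⟩
      obtain ⟨x₁, hx1, x₂, hx2, x₃, hx3, hx12, hx13, hx23⟩ := exists_distinct_of_card
        (A := (((nbrs D u₁).image g).erase a₂).erase a₃) (B := (S u₂).erase a₃)
        (C := (S u₃).erase a₂) (card_pos.2 ⟨t, htA⟩) (by omega) (by omega)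
        (Or.inr (Or.inr fun hsub => htQ.2.2 (hsub htA)))
      exact h'.attach_three hN h12 h13 h23 (by rw [hS1, ← hD]; omega) (by rwa [hS2]) ho2
        (by rwa [hS3]) ho3 (by rwa [hS1]) (by rwa [hS2]) (by rwa [hS3]) hx12 hx13 hx23
  set I := (nbrs D u₁).image (fun w => c w u₁) with hI
  have hold : ∀ w, D.Adj w u₁ → c w u₁ ∉ S w ∧ (∀ z, D.Adj w z → z ≠ u₁ → c w u₁ ≠ c w z) ∧
      ∀ z, D.Adj u₁ z → c u₁ z ≠ c w u₁ := fun w hw =>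
    ⟨hS.notMem_tail hw, fun z hz hne he => hne (hS.inj hw hz he).symm,
      fun z hz he => hS.notMem_tail hz (he ▸ hS.mem_head hw)⟩
  by_cases hI2 : #I ≤ 2
  · exact key _ rfl rfl hold (Or.inl hI2)
  by_cases hIQ : ∃ t ∈ I, t ∉ Q
  · exact key _ rfl rfl hold (Or.inr hIQ)
  push Not at hIQ
  have hnew : ∀ w, w ≠ v → G.Adj u₁ w → #(nbrs G w) ≤ 4 →
      ∃ b, b ≠ c w u₁ ∧ b ∉ S w ∧ (∀ z, D.Adj w z → z ≠ u₁ → b ≠ c w z) ∧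
        ∀ z, D.Adj u₁ z → c u₁ z ≠ b := by
    intro w hwv hw hdw
    have hDuw := hDw w hwv hw
    have h1 : #((outColors D c u₁).erase (c u₁ w)) ≤ 2 := by
      rw [card_erase_of_mem (mem_outColors.2 ⟨w, hDuw, rfl⟩)]
      have := card_outColors_le (H := D) (c := c) u₁
      omega
    have h2 := card_union_le (S w) ((outColors D c u₁).erase (c u₁ w))
    have h3 := hcard w
    obtain ⟨b, hb, hb'⟩ := exists_notMem_union
      (card_outColors_le (H := D) (c := c) w) h2 (by have := hmono w; omega)
    simp only [mem_union, not_or] at hb'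
    refine ⟨b, fun e => hb (mem_outColors.2 ⟨u₁, hDuw.symm, e.symm⟩), hb'.1,
      fun z hz _ e => hb (mem_outColors.2 ⟨z, hz, e.symm⟩), fun z hz e => ?_⟩
    by_cases hz' : c u₁ z = c u₁ w
    · exact hb'.1 (by rw [← e, hz']; exact hS.mem_head hDuw)
    · exact hb'.2 (mem_erase.2 ⟨e ▸ hz', mem_outColors.2 ⟨z, hz, e⟩⟩)
  have hone : ∀ w b, w ≠ v → G.Adj u₁ w → #(nbrs G w) ≤ 4 → b ≠ c w u₁ →
      (b ∉ S w ∧ (∀ z, D.Adj w z → z ≠ u₁ → b ≠ c w z) ∧ ∀ z, D.Adj u₁ z → c u₁ z ≠ b) →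
      (b ∉ Q ∨ b ∈ I) → PaletteColorable G k := by
    intro w b hwv hw hdw hbne hb hcase
    have hmem : w ∈ nbrs D u₁ := mem_nbrs.2 (hDw w hwv hw)
    refine key (Function.update (fun w => c w u₁) w b) (Function.update_of_ne (hu2w w hdw) _ _)
      (Function.update_of_ne (hu3w w hdw) _ _) (fun y hy => ?_) ?_
    · by_cases hyw : y = w
      · subst hyw; simpa only [Function.update_self] using hb
      · simpa only [Function.update_of_ne hyw] using hold y hy
    rcases hcase with hbQ | hbI
    · exact Or.inr ⟨b, mem_image.2 ⟨w, hmem, Function.update_self _ _ _⟩, hbQ⟩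
    · left
      have hinj : Set.InjOn (fun w => c w u₁) (nbrs D u₁ : Set V) :=
        card_image_iff.1 (le_antisymm card_image_le (by rw [← hI]; omega))
      have hsub : (nbrs D u₁).image (Function.update (fun w => c w u₁) w b) ⊆
          I.erase (c w u₁) := by
        intro t ht
        obtain ⟨y, hy, rfl⟩ := mem_image.1 ht
        by_cases hyw : y = w
        · subst hyw
          rw [Function.update_self]
          exact mem_erase.2 ⟨hbne, hbI⟩
        · rw [Function.update_of_ne hyw]
          exact mem_erase.2 ⟨fun e => hyw (hinj hy hmem e), mem_image_of_mem _ hy⟩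
      refine (card_le_card hsub).trans ?_
      have hwI : c w u₁ ∈ I := mem_image_of_mem (fun w => c w u₁) hmem
      rw [card_erase_of_mem hwI]
      have : #I ≤ 3 := card_image_le.trans (by omega)
      omega
  obtain ⟨b₀, hb0, hb0'⟩ := hnew w₀ hw0v hw0 hdw0
  obtain ⟨b₁, hb1, hb1'⟩ := hnew w₁ hw1v hw1 hdw1
  by_cases h0 : b₀ ∉ Q ∨ b₀ ∈ I
  · exact hone w₀ b₀ hw0v hw0 hdw0 hb0 hb0' h0
  by_cases h1 : b₁ ∉ Q ∨ b₁ ∈ I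
  · exact hone w₁ b₁ hw1v hw1 hdw1 hb1 hb1' h1
  push Not at h0 h1
  have hbb : b₀ = b₁ := by
    by_contra hbb
    have hsub : insert b₀ (insert b₁ I) ⊆ Q := by
      intro t ht
      rcases mem_insert.1 ht with rfl | ht
      · exact h0.1
      rcases mem_insert.1 ht with rfl | ht
      · exact h1.1
      exact hIQ t ht
    have := card_le_card hsub
    rw [card_insert_of_notMem (by simp [hbb, h0.2]), card_insert_of_notMem h1.2] at this
    omega
  subst hbb
  refine key (Function.update (Function.update (fun w => c w u₁) w₀ b₀) w₁ b₀) ?_ ?_ ?_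
    (Or.inl ?_)
  · rw [Function.update_of_ne (hu2w _ hdw1), Function.update_of_ne (hu2w _ hdw0)]
  · rw [Function.update_of_ne (hu3w _ hdw1), Function.update_of_ne (hu3w _ hdw0)]
  · intro y hy
    by_cases hy1 : y = w₁
    · subst hy1; simpa only [Function.update_self] using hb1'
    · by_cases hy0 : y = w₀
      · subst hy0; simpa only [Function.update_of_ne hy1, Function.update_self] using hb0'
      · simpa only [Function.update_of_ne hy1, Function.update_of_ne hy0] using hold y hy
  · have hsub : (nbrs D u₁).image (Function.update (Function.update (fun w => c w u₁) w₀ b₀) w₁ b₀)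
        ⊆ insert b₀ ((((nbrs D u₁).erase w₀).erase w₁).image (fun w => c w u₁)) := by
      intro t ht
      obtain ⟨y, hy, rfl⟩ := mem_image.1 ht
      by_cases hy1 : y = w₁
      · subst hy1; simp
      · by_cases hy0 : y = w₀
        · subst hy0; simp [Function.update_of_ne hy1]
        · rw [Function.update_of_ne hy1, Function.update_of_ne hy0]
          exact mem_insert_of_mem (mem_image_of_mem _ (by simp [hy1, hy0, mem_nbrs.1 hy]))
    have hcd : #(((nbrs D u₁).erase w₀).erase w₁) ≤ 1 := by
      rw [card_erase_of_mem (mem_erase.2 ⟨hw.symm, mem_nbrs.2 (hDw w₁ hw1v hw1)⟩),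
        card_erase_of_mem (mem_nbrs.2 (hDw w₀ hw0v hw0))]
      omega
    exact (card_le_card hsub).trans ((card_insert_le _ _).trans
      (Nat.add_le_add_right (card_image_le.trans hcd) 1))

end

/-- The charge, scaled by `15`, that a vertex of degree `m` sends to a neighbor of degree `n`. -/
def sentCharge (m n : ℕ) : ℤ :=
  if n ≤ 4 then
    if 7 ≤ m then 6 else if m = 6 then 5 else if m = 5 then 3
    else if m = 4 ∧ n = 3 then 3 else 0
  else 0

section

variable {V : Type*} [Fintype V] {G : SimpleGraph V}

lemma sum_nbrs_comm (f : V → V → ℤ) :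
    ∑ v, ∑ u ∈ nbrs G v, f v u = ∑ v, ∑ u ∈ nbrs G v, f u v := by
  simp only [nbrs, sum_filter]
  rw [sum_comm]
  simp only [G.adj_comm]

lemma sum_sentCharge_three {v : V} (h3 : #(nbrs G v) = 3)
    (hmin : ∀ u ∈ nbrs G v, 4 ≤ #(nbrs G u))
    (h56 : ∀ u ∈ nbrs G v, ∀ w ∈ nbrs G v, u ≠ w → #(nbrs G u) ≤ 5 → 7 ≤ #(nbrs G w)) :
    15 ≤ ∑ u ∈ nbrs G v, (sentCharge #(nbrs G u) 3 - sentCharge 3 #(nbrs G u)) := by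
  obtain ⟨a, b, c, hab, hac, hbc, hN⟩ := card_eq_three.1 h3
  rw [hN] at hmin h56 ⊢
  simp only [mem_insert, mem_singleton, forall_eq_or_imp, forall_eq] at hmin h56
  rw [sum_insert (by simp [hab, hac]), sum_insert (by simp [hbc]), sum_singleton]
  obtain ⟨⟨-, hab', hac'⟩, ⟨hba', -, hbc'⟩, hca', hcb', -⟩ := h56
  replace hab' := hab' hab
  replace hac' := hac' hac
  replace hba' := hba' hab.symm
  replace hbc' := hbc' hbc
  replace hca' := hca' hac.symm
  replace hcb' := hcb' hbc.symm
  have h0 : ∀ n, sentCharge 3 n = 0 := by intro n; simp [sentCharge]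
  have key : ∀ n, 4 ≤ n → (n ≤ 5 ∧ sentCharge n 3 = 3) ∨ (n = 6 ∧ sentCharge n 3 = 5) ∨
      (7 ≤ n ∧ sentCharge n 3 = 6) := by
    intro n hn
    unfold sentCharge
    split_ifs <;> omega
  have ka := key _ hmin.1
  have kb := key _ hmin.2.1
  have kc := key _ hmin.2.2
  simp only [h0]
  omega

lemma sum_sentCharge_four {v : V} (h4 : #(nbrs G v) = 4)
    (hmin : ∀ u ∈ nbrs G v, 3 ≤ #(nbrs G u))
    (hsmall : ∀ u ∈ nbrs G v, #(nbrs G u) = 3 → ∀ a ∈ nbrs G v, ∀ b ∈ nbrs G v, a ≠ b →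
      a ≠ u → b ≠ u → #(nbrs G a) ≤ 4 → 5 ≤ #(nbrs G b)) :
    0 ≤ ∑ u ∈ nbrs G v, (sentCharge #(nbrs G u) 4 - sentCharge 4 #(nbrs G u)) := by
  have key : ∀ n, 3 ≤ n → (n = 3 ∧ sentCharge n 4 - sentCharge 4 n = -3) ∨
      (n = 4 ∧ sentCharge n 4 - sentCharge 4 n = 0) ∨
      (5 ≤ n ∧ 3 ≤ sentCharge n 4 - sentCharge 4 n) := by
    intro n hn
    unfold sentCharge
    split_ifs <;> omega
  by_cases h : ∃ u ∈ nbrs G v, #(nbrs G u) = 3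
  · obtain ⟨u, hu, hu3⟩ := h
    obtain ⟨a, b, c, hab, hac, hbc, hN⟩ := card_eq_three.1
      (show #((nbrs G v).erase u) = 3 by rw [card_erase_of_mem hu, h4])
    rw [← add_sum_erase _ _ hu, hN, sum_insert (by simp [hab, hac]), sum_insert (by simp [hbc]),
      sum_singleton]
    have ha : a ∈ (nbrs G v).erase u := by simp [hN]
    have hb : b ∈ (nbrs G v).erase u := by simp [hN]
    have hc : c ∈ (nbrs G v).erase u := by simp [hN]
    rw [mem_erase] at ha hb hc
    have s1 := hsmall u hu hu3 a ha.2 b hb.2 hab ha.1 hb.1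
    have s2 := hsmall u hu hu3 a ha.2 c hc.2 hac ha.1 hc.1
    have s3 := hsmall u hu hu3 b hb.2 c hc.2 hbc hb.1 hc.1
    have k0 := key _ (hmin u hu)
    have k1 := key _ (hmin a ha.2)
    have k2 := key _ (hmin b hb.2)
    have k3 := key _ (hmin c hc.2)
    omega
  · refine sum_nonneg fun u hu => ?_
    have := key _ (hmin u hu)
    have : #(nbrs G u) ≠ 3 := fun e => h ⟨u, hu, e⟩
    omega

lemma sentCharge_sum_of_five_le {v : V} (h5 : 5 ≤ #(nbrs G v)) :
    0 ≤ 15 * ((#(nbrs G v) : ℤ) - 4) +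
      ∑ u ∈ nbrs G v, (sentCharge #(nbrs G u) #(nbrs G v) -
        sentCharge #(nbrs G v) #(nbrs G u)) := by
  have key : ∀ d : ℕ, 5 ≤ d → ∃ t : ℤ, (∀ n, -t ≤ sentCharge n d - sentCharge d n) ∧
      0 ≤ t ∧ (7 ≤ d ∧ t = 6 ∨ d = 6 ∧ t = 5 ∨ d = 5 ∧ t = 3) := by
    intro d hd
    rcases (by omega : 7 ≤ d ∨ d = 6 ∨ d = 5) with h | h | h
    · refine ⟨6, fun n => ?_, by omega, by omega⟩
      unfold sentCharge
      split_ifs <;> omega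
    · refine ⟨5, fun n => ?_, by omega, by omega⟩
      unfold sentCharge
      split_ifs <;> omega
    · refine ⟨3, fun n => ?_, by omega, by omega⟩
      unfold sentCharge
      split_ifs <;> omega
  obtain ⟨t, ht, -, hcase⟩ := key _ h5
  have h := card_nsmul_le_sum (nbrs G v) (fun u => sentCharge #(nbrs G u) #(nbrs G v) -
        sentCharge #(nbrs G v) #(nbrs G u)) (-t) fun u _ => ht _
  rw [nsmul_eq_mul] at h
  rcases hcase with ⟨h1, rfl⟩ | ⟨h1, rfl⟩ | ⟨h1, rfl⟩ <;> omega

/-- The discharging argument: without the listed configurations, the average degree over the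
non-isolated vertices is at least four. -/
lemma four_mul_card_le_sum_card_nbrs
    (h0 : ∀ v, #(nbrs G v) ≠ 0 → 3 ≤ #(nbrs G v))
    (h33 : ∀ v u, #(nbrs G v) = 3 → G.Adj v u → 4 ≤ #(nbrs G u))
    (h56 : ∀ v u w, #(nbrs G v) = 3 → G.Adj v u → G.Adj v w → u ≠ w → #(nbrs G u) ≤ 5 →
      7 ≤ #(nbrs G w))
    (h4 : ∀ v u a b, #(nbrs G v) = 4 → #(nbrs G u) = 3 → G.Adj v u → G.Adj v a → G.Adj v b →
      a ≠ b → a ≠ u → b ≠ u → #(nbrs G a) ≤ 4 → 5 ≤ #(nbrs G b)) :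
    4 * #(univ.filter fun v => #(nbrs G v) ≠ 0) ≤ ∑ v, #(nbrs G v) := by
  have hadj : ∀ v, ∀ u ∈ nbrs G v, 3 ≤ #(nbrs G u) := fun v u hu =>
    h0 u (card_pos.2 ⟨v, mem_nbrs.2 (mem_nbrs.1 hu).symm⟩).ne'
  have hlocal : ∀ v, 0 ≤ (if #(nbrs G v) ≠ 0 then 15 * ((#(nbrs G v) : ℤ) - 4) else 0) +
      ∑ u ∈ nbrs G v, (sentCharge #(nbrs G u) #(nbrs G v) -
        sentCharge #(nbrs G v) #(nbrs G u)) := by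
    intro v
    by_cases hv : #(nbrs G v) = 0
    · rw [if_neg (not_not.2 hv), card_eq_zero.1 hv]
      simp
    rw [if_pos hv]
    rcases (by have := h0 v hv; omega : #(nbrs G v) = 3 ∨ #(nbrs G v) = 4 ∨ 5 ≤ #(nbrs G v))
      with h | h | h
    · have := sum_sentCharge_three h (fun u hu => h33 v u h (mem_nbrs.1 hu))
        (fun u hu w hw => h56 v u w h (mem_nbrs.1 hu) (mem_nbrs.1 hw))
      rw [h]
      push_cast
      omega
    · have := sum_sentCharge_four h (hadj v) (fun u hu hu3 a ha b hb =>
        h4 v u a b h hu3 (mem_nbrs.1 hu) (mem_nbrs.1 ha) (mem_nbrs.1 hb))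
      rw [h]
      push_cast
      omega
    · exact sentCharge_sum_of_five_le h
  have hsum := sum_nonneg fun v (_ : v ∈ (univ : Finset V)) => hlocal v
  rw [sum_add_distrib] at hsum
  simp only [sum_sub_distrib] at hsum
  rw [sum_nbrs_comm fun v u => sentCharge #(nbrs G u) #(nbrs G v), sub_self, add_zero,
    ← sum_filter, ← mul_sum, sum_sub_distrib, sum_const, nsmul_eq_mul] at hsum
  have hfilter : ∑ v ∈ univ.filter (fun v => #(nbrs G v) ≠ 0), (#(nbrs G v) : ℤ) =
      ∑ v, (#(nbrs G v) : ℤ) :=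
    sum_filter_of_ne fun v _ hv => by exact_mod_cast hv
  rw [hfilter] at hsum
  have h : 4 * (#(univ.filter fun v => #(nbrs G v) ≠ 0) : ℤ) ≤ ∑ v, (#(nbrs G v) : ℤ) := by
    linarith
  exact_mod_cast h

end

lemma MadLT.sum_card_nbrs_lt {V : Type*} [Fintype V] {G H : SimpleGraph V} (hmad : MadLT G 4)
    (hle : H ≤ G) (hne : ∃ v, #(nbrs H v) ≠ 0) :
    ∑ v, #(nbrs H v) < 4 * #(univ.filter fun v => #(nbrs H v) ≠ 0) := by
  let K : G.Subgraph :=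
    { verts := {v | #(nbrs H v) ≠ 0}
      Adj := H.Adj
      adj_sub := fun h => hle h
      edge_vert := fun h => (card_pos.2 ⟨_, mem_nbrs.2 h⟩).ne'
      symm := H.symm }
  have h := hmad K hne
  have hedge : K.edgeSet = H.edgeSet := by
    ext e
    induction e with
    | _ x y => rfl
  have hdeg : ∀ v, #(nbrs H v) = H.degree v := by
    intro v
    rw [← H.card_neighborFinset_eq_degree]
    congr 1
    ext u
    simp
  have hverts : K.verts.ncard = #(univ.filter fun v => #(nbrs H v) ≠ 0) := by
    rw [← Set.ncard_coe_finset]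
    congr 1
    ext v
    simp [K]
  have hsum : ∑ v, #(nbrs H v) = 2 * K.edgeSet.ncard := by
    rw [hedge, ← coe_edgeFinset, Set.ncard_coe_finset, ← H.sum_degrees_eq_twice_card_edges]
    exact sum_congr rfl fun v _ => hdeg v
  rw [hsum, ← hverts]
  exact_mod_cast h

lemma nbrs_eq_of_adj {V : Type*} [Fintype V] {G : SimpleGraph V} {v u w : V}
    (h3 : #(nbrs G v) = 3) (hu : G.Adj v u) (hw : G.Adj v w) (huw : u ≠ w) :
    ∃ z, nbrs G v = {u, w, z} ∧ u ≠ z ∧ w ≠ z := by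
  have hw' : w ∈ (nbrs G v).erase u := mem_erase.2 ⟨huw.symm, mem_nbrs.2 hw⟩
  obtain ⟨z, hz⟩ := card_eq_one.1 (show #(((nbrs G v).erase u).erase w) = 1 by
    rw [card_erase_of_mem hw', card_erase_of_mem (mem_nbrs.2 hu), h3])
  have hz' : z ∈ ((nbrs G v).erase u).erase w := by simp [hz]
  simp only [mem_erase] at hz'
  exact ⟨z, by rw [← hz, insert_erase hw', insert_erase (mem_nbrs.2 hu)],
    hz'.2.1.symm, hz'.1.symm⟩

lemma nbrs_eq_of_adj_one {V : Type*} [Fintype V] {G : SimpleGraph V} {v u : V}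
    (h3 : #(nbrs G v) = 3) (hu : G.Adj v u) :
    ∃ w z, nbrs G v = {u, w, z} ∧ u ≠ w ∧ u ≠ z ∧ w ≠ z := by
  obtain ⟨w, hw, hwu⟩ := exists_mem_ne (show 1 < #(nbrs G v) by omega) u
  obtain ⟨z, hz, huz, hwz⟩ := nbrs_eq_of_adj h3 hu (mem_nbrs.1 hw) hwu.symm
  exact ⟨w, z, hz, hwu.symm, huz, hwz⟩

lemma MadLT.paletteColorable {V : Type*} [Fintype V] {G : SimpleGraph V} (hmad : MadLT G 4)
    {k : ℕ} (hk : 10 ≤ k) (hdeg : ∀ v, #(nbrs G v) + 3 ≤ k) (H : SimpleGraph V) (hle : H ≤ G) :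
    PaletteColorable H k := by
  induction H using WellFoundedLT.induction with
  | ind H ih =>
    have hdegH : ∀ v, #(nbrs H v) + 3 ≤ k := fun v =>
      (Nat.add_le_add_right (card_nbrs_mono hle v) 3).trans (hdeg v)
    by_cases hne : ∃ v, #(nbrs H v) ≠ 0
    swap
    · push Not at hne
      have hno : ∀ v u, ¬ H.Adj v u := fun v u hvu => by
        have := mem_nbrs.2 hvu
        rw [card_eq_zero.1 (hne v)] at this
        simp at this
      exact ⟨fun _ _ => ⟨0, by omega⟩, fun _ => ∅, by simp, fun v u h => absurd h (hno v u),
        fun v u h => absurd h (hno v u), fun v u _ h => absurd h (hno v u)⟩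
    by_contra hcol
    have hdel : ∀ v, #(nbrs H v) ≠ 0 → PaletteColorable (H.deleteIncidenceSet v) k := by
      intro v hv
      have hlt : H.deleteIncidenceSet v < H := by
        refine lt_of_le_not_ge (deleteIncidenceSet_le H v) fun hge => ?_
        obtain ⟨u, hu⟩ := card_pos.1 (Nat.pos_of_ne_zero hv)
        exact (deleteIncidenceSet_adj.1 (hge (mem_nbrs.1 hu))).2.1 rfl
      exact ih _ hlt (hlt.le.trans hle)
    have h56 : ∀ v u w, #(nbrs H v) = 3 → H.Adj v u → H.Adj v w → u ≠ w → #(nbrs H u) ≤ 5 →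
        7 ≤ #(nbrs H w) := by
      intro v u w hv hu hw huw hu5
      by_contra hw7
      obtain ⟨z, hN, huz, hwz⟩ := nbrs_eq_of_adj hv hu hw huw
      exact hcol ((hdel v (by omega)).of_five_six hdegH hk hN huw huz hwz hu5 (by omega))
    refine absurd (hmad.sum_card_nbrs_lt hle hne) (not_lt.2
      (four_mul_card_le_sum_card_nbrs (fun v hv => ?_) (fun v u hv hu => ?_) h56 ?_))
    · by_contra hv3
      exact hcol ((hdel v hv).of_card_nbrs_le_two hdegH (by omega))
    · by_contra hu4
      obtain ⟨w, z, hN, huw, huz, hwz⟩ := nbrs_eq_of_adj_one hv hu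
      exact hcol ((hdel v (by omega)).of_three_three hdegH hk hN huw huz hwz (by omega))
    · intro u v a b hu hv huv hua hub hab hav hbv ha
      by_contra hb
      obtain ⟨w, z, hN, huw, huz, hwz⟩ := nbrs_eq_of_adj_one hv huv.symm
      have hw := h56 v u w hv huv.symm (by rw [← mem_nbrs, hN]; simp) huw (by omega)
      have hz := h56 v u z hv huv.symm (by rw [← mem_nbrs, hN]; simp) huz (by omega)
      exact hcol ((hdel v (by omega)).of_four hdegH hk hN huw huz hwz (by omega) (by omega)
        (by omega) hab hav hbv hua hub (by omega) (by omega))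

end IncidenceColoring

theorem incidence_chromatic_mad_lt_four {V : Type*} [Fintype V] (G : SimpleGraph V)
    [DecidableRel G.Adj] (hmad : MadLT G 4) (hΔ : 7 ≤ G.maxDegree) :
    incChromaticNumber G ≤ G.maxDegree + 3 := by
  have hdeg : ∀ v, (nbrs G v).card + 3 ≤ G.maxDegree + 3 := by
    intro v
    have : nbrs G v = G.neighborFinset v := by
      ext u
      simp
    rw [this, card_neighborFinset_eq_degree]
    exact Nat.add_le_add_right (G.degree_le_maxDegree v) 3
  obtain ⟨c, S, hS⟩ := hmad.paletteColorable (by omega) hdeg G le_rfl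
  exact Nat.sInf_le ⟨c, hS.isIncidenceColoring⟩
end

section
/- Let G be a finite simple graph with maximum average degree mad(G) < 6 whose maximum degree satisfies Δ(G) ≥ 12 or Δ(G) ≤ 6. Then χ_i(G) ≤ Δ(G) + 6. -/
open SimpleGraph

open Finset in
/-- Lists at least as long as the number of indices have a system of distinct representatives. -/
theorem exists_injOn_choice {ι C : Type*} [DecidableEq ι] [DecidableEq C] [Nonempty C]
    (A : Finset ι) (T : ι → Finset C) (h : ∀ u ∈ A, #A ≤ #(T u)) :
    ∃ f : ι → C, (∀ u ∈ A, f u ∈ T u) ∧ Set.InjOn f A := by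
  induction A using Finset.induction_on with
  | empty => exact ⟨fun _ => Classical.arbitrary C, by simp, by simp⟩
  | insert a A ha ih =>
    rw [card_insert_of_notMem ha] at h
    obtain ⟨f, hf, hinj⟩ := ih fun u hu => by
      have := h u (mem_insert_of_mem hu)
      omega
    obtain ⟨x, hx, hxA⟩ : ∃ x ∈ T a, x ∉ A.image f := by
      refine exists_mem_notMem_of_card_lt_card ?_
      have := h a (mem_insert_self a A)
      have := card_image_le (s := A) (f := f)
      omega
    refine ⟨Function.update f a x, ?_, ?_⟩
    · intro u hu
      rcases eq_or_ne u a with rfl | hua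
      · simpa using hx
      · simpa [hua] using hf u (mem_of_mem_insert_of_ne hu hua)
    · intro u hu w hw huw
      have key : ∀ z ∈ A, f z ≠ x := fun z hz hzx => hxA (mem_image.2 ⟨z, hz, hzx⟩)
      simp only [coe_insert, Set.mem_insert_iff, mem_coe] at hu hw
      have := @hinj u
      grind [Function.update_apply]

open Finset in
/-- Colors `c u` of the incidences pointing to a vertex and `f u` of those leaving it can be chosen
from the lists `L u` and `S u` if there are few short lists `L u`. -/
theorem exists_local_coloring_of_few_short {ι C : Type*} [DecidableEq ι] [DecidableEq C]
    [Nonempty C] (N : Finset ι) (S L : ι → Finset C) (hS : ∀ u ∈ N, #(S u) = 6)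
    (hL : ∀ u ∈ N, (L u).Nonempty) (hd : ∀ u ∈ N, Disjoint (S u) (L u)) (hN : #N ≤ 5)
    (hB : #{u ∈ N | #(L u) < #N} + #N ≤ 7) :
    ∃ c f : ι → C, (∀ u ∈ N, c u ∈ L u) ∧ (∀ u ∈ N, f u ∈ S u) ∧ Set.InjOn f N ∧
      ∀ u ∈ N, ∀ w ∈ N, f u ≠ c w := by
  set B := {u ∈ N | #(L u) < #N} with hBdef
  have hBN : B ⊆ N := filter_subset _ _
  have hcard : #(N \ B) + #B = #N := card_sdiff_add_card_eq_card hBN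
  choose! c₀ hc₀ using hL
  obtain ⟨f₁, hf₁, hinj₁⟩ := exists_injOn_choice (N \ B) (fun u => S u \ B.image c₀) fun u hu => by
    have h1 := le_card_sdiff (B.image c₀) (S u)
    have h2 := card_image_le (s := B) (f := c₀)
    rw [hS u (mem_sdiff.1 hu).1] at h1
    omega
  obtain ⟨f₂, hf₂, hinj₂⟩ := exists_injOn_choice B
      (fun u => S u \ ((B.erase u).image c₀ ∪ (N \ B).image f₁)) fun u hu => by
    have h1 := le_card_sdiff ((B.erase u).image c₀ ∪ (N \ B).image f₁) (S u)
    have h2 := card_image_le (s := B.erase u) (f := c₀)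
    have h3 := card_image_le (s := N \ B) (f := f₁)
    have h4 := card_union_le ((B.erase u).image c₀) ((N \ B).image f₁)
    have h5 := card_erase_add_one hu
    rw [hS u (hBN hu)] at h1
    omega
  set f : ι → C := fun u => if u ∈ B then f₂ u else f₁ u with hf
  have hfS : ∀ u ∈ N, f u ∈ S u := by
    intro u hu
    by_cases hb : u ∈ B
    · simpa [hf, hb] using (mem_sdiff.1 (hf₂ u hb)).1
    · simpa [hf, hb] using (mem_sdiff.1 (hf₁ u (mem_sdiff.2 ⟨hu, hb⟩))).1
  have hc₁ : ∀ u ∈ N \ B, ∃ x ∈ L u, x ∉ (N.erase u).image f := by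
    intro u hu
    obtain ⟨huN, hub⟩ := mem_sdiff.1 hu
    refine exists_mem_notMem_of_card_lt_card ?_
    have h1 := card_image_le (s := N.erase u) (f := f)
    have h2 := card_erase_add_one huN
    have h3 : ¬ #(L u) < #N := fun h => hub (mem_filter.2 ⟨huN, h⟩)
    omega
  choose! c₁ hc₁L hc₁f using hc₁
  have hcross : ∀ u ∈ N, ∀ x ∈ L u, f u ≠ x := fun u hu x hx h =>
    disjoint_left.1 (hd u hu) (hfS u hu) (h ▸ hx)
  refine ⟨fun u => if u ∈ B then c₀ u else c₁ u, f, ?_, hfS, ?_, ?_⟩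
  · intro u hu
    by_cases hb : u ∈ B
    · simpa [hb] using hc₀ u hu
    · simpa [hb] using hc₁L u (mem_sdiff.2 ⟨hu, hb⟩)
  · intro u hu w hw huw
    have h12 : ∀ x ∈ B, ∀ y ∈ N \ B, f₂ x ≠ f₁ y := fun x hx y hy h =>
      (mem_sdiff.1 (hf₂ x hx)).2 (mem_union_right _ (mem_image.2 ⟨y, hy, h.symm⟩))
    have e1 := @hinj₁ u
    have e2 := @hinj₂ u
    simp only [hf] at huw
    simp only [coe_sdiff, Set.mem_sdiff, mem_coe, mem_sdiff] at *
    grind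
  · intro u hu w hw
    by_cases hwb : w ∈ B
    · simp only [hwb, if_true]
      rcases eq_or_ne u w with rfl | huw
      · exact hcross u hu _ (hc₀ u hu)
      by_cases hub : u ∈ B
      · intro h
        refine (mem_sdiff.1 (hf₂ u hub)).2 (mem_union_left _ (mem_image.2 ⟨w, ?_, ?_⟩))
        · exact mem_erase.2 ⟨huw.symm, hwb⟩
        · simpa [hf, hub] using h.symm
      · intro h
        refine (mem_sdiff.1 (hf₁ u (mem_sdiff.2 ⟨hu, hub⟩))).2 (mem_image.2 ⟨w, hwb, ?_⟩)
        simpa [hf, hub] using h.symm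
    · simp only [hwb, if_false]
      have hw' := mem_sdiff.2 ⟨hw, hwb⟩
      rcases eq_or_ne u w with rfl | huw
      · exact hcross u hu _ (hc₁L u hw')
      · exact fun h => hc₁f w hw' (mem_image.2 ⟨u, mem_erase.2 ⟨huw, hu⟩, h⟩)

open Finset in
/-- The same choice of colors around a vertex with four neighbors, where a single list `L t` of
length two suffices. -/
theorem exists_local_coloring_of_card_eq_four {ι C : Type*} [DecidableEq ι] [DecidableEq C]
    (N : Finset ι) (S L : ι → Finset C) (hS : ∀ u ∈ N, #(S u) = 6)
    (hL : ∀ u ∈ N, (L u).Nonempty) (hd : ∀ u ∈ N, Disjoint (S u) (L u)) (hN : #N = 4)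
    (ht : ∃ t ∈ N, 2 ≤ #(L t)) :
    ∃ c f : ι → C, (∀ u ∈ N, c u ∈ L u) ∧ (∀ u ∈ N, f u ∈ S u) ∧ Set.InjOn f N ∧
      ∀ u ∈ N, ∀ w ∈ N, f u ≠ c w := by
  obtain ⟨t, htN, htL⟩ := ht
  obtain ⟨p, q, r, hpq, hpr, hqr, hE⟩ := card_eq_three.1
    (show #(N.erase t) = 3 by rw [card_erase_of_mem htN, hN])
  have hNeq : N = {t, p, q, r} := by rw [← hE, insert_erase htN]
  have htp : t ≠ p := fun h => by
    have : p ∈ N.erase t := by simp [hE]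
    simp [h] at this
  have htq : t ≠ q := fun h => by
    have : q ∈ N.erase t := by simp [hE]
    simp [h] at this
  have htr : t ≠ r := fun h => by
    have : r ∈ N.erase t := by simp [hE]
    simp [h] at this
  obtain ⟨a, ha, b, hb, hab⟩ := one_lt_card.1 htL
  have hp : p ∈ N := by simp [hNeq]
  have hq : q ∈ N := by simp [hNeq]
  have hr : r ∈ N := by simp [hNeq]
  obtain ⟨cp, hcp⟩ := hL p hp
  obtain ⟨cq, hcq⟩ := hL q hq
  obtain ⟨cr, hcr⟩ := hL r hr
  have avoid : ∀ u ∈ N, ∀ x₁ x₂ x₃ x₄ x₅ : C, ∃ y ∈ S u, y ∉ ({x₁, x₂, x₃, x₄, x₅} : Finset C) :=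
    fun u hu x₁ x₂ x₃ x₄ x₅ => by
      refine exists_mem_notMem_of_card_lt_card ?_
      have := card_le_five (a := x₁) (b := x₂) (c := x₃) (d := x₄) (e := x₅)
      rw [hS u hu]
      omega
  have disj : ∀ u ∈ N, ∀ x ∈ S u, ∀ y ∈ L u, x ≠ y := fun u hu x hx y hy h =>
    disjoint_left.1 (hd u hu) hx (h ▸ hy)
  suffices h : ∃ ct ∈ L t, ∃ fp ∈ S p, ∃ fq ∈ S q, ∃ fr ∈ S r, ∃ ft ∈ S t,
      fp ≠ fq ∧ fp ≠ fr ∧ fp ≠ ft ∧ fq ≠ fr ∧ fq ≠ ft ∧ fr ≠ ft ∧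
      fp ≠ cq ∧ fp ≠ cr ∧ fp ≠ ct ∧ fq ≠ cp ∧ fq ≠ cr ∧ fq ≠ ct ∧
      fr ≠ cp ∧ fr ≠ cq ∧ fr ≠ ct ∧ ft ≠ cp ∧ ft ≠ cq ∧ ft ≠ cr by
    obtain ⟨ct, hct, fp, hfp, fq, hfq, fr, hfr, ft, hft, h⟩ := h
    have dp := disj p hp fp hfp cp hcp
    have dq := disj q hq fq hfq cq hcq
    have dr := disj r hr fr hfr cr hcr
    have dt := disj t htN ft hft ct hct
    refine ⟨fun u => if u = p then cp else if u = q then cq else if u = r then cr else ct,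
      fun u => if u = p then fp else if u = q then fq else if u = r then fr else ft, ?_, ?_, ?_, ?_⟩
    · intro u hu
      simp only [hNeq, mem_insert, mem_singleton] at hu
      grind
    · intro u hu
      simp only [hNeq, mem_insert, mem_singleton] at hu
      grind
    · intro u hu w hw huw
      simp only [hNeq, coe_insert, coe_singleton, Set.mem_insert_iff, Set.mem_singleton_iff]
        at hu hw
      grind
    · intro u hu w hw
      simp only [hNeq, mem_insert, mem_singleton] at hu hw
      grind
  by_cases hb' : b ∉ S p ∨ b = cq ∨ b = cr
  · obtain ⟨fq, hfq, nq⟩ := avoid q hq cp cr b b b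
    obtain ⟨fr, hfr, nr⟩ := avoid r hr cp cq b fq fq
    obtain ⟨ft, hft, nt⟩ := avoid t htN cp cq cr fq fr
    obtain ⟨fp, hfp, np⟩ := avoid p hp cq cr fq fr ft
    simp only [mem_insert, mem_singleton, not_or] at nq nr nt np
    refine ⟨b, hb, fp, hfp, fq, hfq, fr, hfr, ft, hft, ?_⟩
    grind
  · push Not at hb'
    obtain ⟨fq, hfq, nq⟩ := avoid q hq cp cr a b b
    obtain ⟨fr, hfr, nr⟩ := avoid r hr cp cq a b fq
    obtain ⟨ft, hft, nt⟩ := avoid t htN cp cq cr fq fr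
    have dt := disj t htN ft hft b hb
    simp only [mem_insert, mem_singleton, not_or] at nq nr nt
    refine ⟨a, ha, b, hb'.1, fq, hfq, fr, hfr, ft, hft, ?_⟩
    grind

open Finset in
/-- Discharging: each vertex `u` of degree at least six gives `1 - 6 / deg u` to every neighbor,
which leaves some vertex short. -/
theorem exists_poor_vertex {V : Type*} [Fintype V] (H : SimpleGraph V) [DecidableRel H.Adj]
    (hmad : MadLT H 6) (hne : ∃ v, 0 < H.degree v) :
    ∃ v, 0 < H.degree v ∧ H.degree v ≤ 5 ∧
      ∑ u ∈ H.neighborFinset v, max 0 (1 - 6 / (H.degree u : ℝ)) < 6 - H.degree v := by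
  classical
  by_contra! hcon
  set w : V → ℝ := fun u => max 0 (1 - 6 / (H.degree u : ℝ)) with hw
  have hw0 : ∀ u, 0 ≤ w u := fun u => le_max_left _ _
  have hlocal : ∀ v, (if 0 < H.degree v then (6 : ℝ) else 0) + H.degree v * w v ≤
      H.degree v + ∑ u ∈ H.neighborFinset v, w u := by
    intro v
    have hs : 0 ≤ ∑ u ∈ H.neighborFinset v, w u := sum_nonneg fun u _ => hw0 u
    split_ifs with hv
    · have hv' : (0 : ℝ) < H.degree v := by exact_mod_cast hv
      rcases le_or_gt (H.degree v) 5 with h5 | h5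
      · have h5' : (H.degree v : ℝ) ≤ 5 := by exact_mod_cast h5
        have : w v = 0 := by
          refine max_eq_left ?_
          rw [sub_nonpos, le_div_iff₀ hv']
          linarith
        rw [this, mul_zero, add_zero]
        linarith [hcon v hv h5]
      · have h6 : (6 : ℝ) ≤ H.degree v := by exact_mod_cast h5
        have : w v = 1 - 6 / (H.degree v : ℝ) := by
          refine max_eq_right ?_
          rw [sub_nonneg, div_le_one hv']
          exact h6
        have : H.degree v * w v = H.degree v - 6 := by
          rw [this]
          field_simp
        linarith
    · have : H.degree v = 0 := by omega
      simp only [this, Nat.cast_zero, zero_mul, zero_add]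
      exact hs
  have hdouble : ∑ v, ∑ u ∈ H.neighborFinset v, w u = ∑ v, H.degree v * w v := by
    rw [sum_comm' (t' := univ) (s' := fun u => H.neighborFinset u)
      (by simp [SimpleGraph.adj_comm])]
    simp
  have hsum := sum_le_sum fun v (_ : v ∈ univ) => hlocal v
  rw [sum_add_distrib, sum_add_distrib, hdouble, ← sum_filter, sum_const, nsmul_eq_mul] at hsum
  have hdeg : (∑ v, (H.degree v : ℝ)) = 2 * #H.edgeFinset := by
    exact_mod_cast H.sum_degrees_eq_twice_card_edges
  let H' : H.Subgraph :=
    { verts := {v | 0 < H.degree v}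
      Adj := H.Adj
      adj_sub := id
      edge_vert := fun h => (H.degree_pos_iff_exists_adj _).2 ⟨_, h⟩
      symm := H.symm }
  have hmad' := hmad H' hne
  have he : H'.edgeSet.ncard = #H.edgeFinset := by
    rw [← Set.ncard_coe_finset, SimpleGraph.coe_edgeFinset]
    rfl
  have hverts : H'.verts.ncard = #{v | 0 < H.degree v} := by
    rw [← Set.ncard_coe_finset]
    simp [H']
  rw [he, hverts] at hmad'
  linarith

theorem MadLT.mono {V : Type*} {G H : SimpleGraph V} {q : ℝ} (hG : MadLT G q) (h : H ≤ G) :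
    MadLT H q := fun K hK =>
  hG { verts := K.verts, Adj := K.Adj, adj_sub := fun a => h (K.adj_sub a),
       edge_vert := K.edge_vert, symm := K.symm } hK

open Finset in
/-- A coloring in which the incidences pointing to `v` take their colors from a set `S v` of size
six, and those leaving `v` avoid `S v`. -/
theorem exists_coloring_with_palettes {V : Type*} [Fintype V] {M : ℕ}
    (hM : 12 ≤ M) (H : SimpleGraph V) [hdec : DecidableRel H.Adj] (hmad : MadLT H 6)
    (hdeg : ∀ v, H.degree v ≤ M) :
    ∃ (φ : V → V → Fin (M + 6)) (S : V → Finset (Fin (M + 6))), (∀ v, #(S v) = 6) ∧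
      (∀ v u, H.Adj v u → φ v u ∈ S u ∧ φ v u ∉ S v) ∧
      ∀ v u x, H.Adj v u → H.Adj v x → φ v u = φ v x → u = x := by
  classical
  induction H using WellFoundedLT.induction generalizing hdec with
  | ind H ih =>
  by_cases hne : ∃ v, 0 < H.degree v
  swap
  · have hno : ∀ v u, ¬ H.Adj v u := fun v u h =>
      hne ⟨v, (H.degree_pos_iff_exists_adj v).2 ⟨u, h⟩⟩
    obtain ⟨T, -, hT⟩ := exists_subset_card_eq (s := (univ : Finset (Fin (M + 6)))) (n := 6)
      (by simp)
    exact ⟨fun _ _ => 0, fun _ => T, fun _ => hT, fun v u h => (hno v u h).elim,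
      fun v u x h => (hno v u h).elim⟩
  obtain ⟨v, hv0, hv5, hvw⟩ := exists_poor_vertex H hmad hne
  set N := H.neighborFinset v with hNdef
  have hNcard : #N = H.degree v := rfl
  have hmemN : ∀ u, u ∈ N ↔ H.Adj v u := fun u => H.mem_neighborFinset v u
  let H' : SimpleGraph V :=
    { Adj := fun x y => H.Adj x y ∧ x ≠ v ∧ y ≠ v
      symm := ⟨fun x y h => ⟨h.1.symm, h.2.2, h.2.1⟩⟩
      loopless := ⟨fun x h => H.irrefl h.1⟩ }
  have hle : H' ≤ H := fun x y h => h.1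
  have hlt : H' < H := by
    refine lt_of_le_of_ne hle fun h => ?_
    obtain ⟨u, hu⟩ := (H.degree_pos_iff_exists_adj v).1 hv0
    rw [← h] at hu
    exact hu.2.1 rfl
  obtain ⟨φ, S, hS, hφS, hφ⟩ := ih H' hlt (hmad.mono hle) fun x =>
    (SimpleGraph.degree_le_of_le hle).trans (hdeg x)
  set L : V → Finset (Fin (M + 6)) := fun u => univ \ (S u ∪ (H'.neighborFinset u).image (φ u))
    with hLdef
  have hLcard : ∀ u ∈ N, M + 1 ≤ #(L u) + H.degree u := by
    intro u hu
    have h1 := le_card_sdiff (S u ∪ (H'.neighborFinset u).image (φ u)) univ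
    have h2 := card_union_le (S u) ((H'.neighborFinset u).image (φ u))
    have h3 := card_image_le (s := H'.neighborFinset u) (f := φ u)
    have h4 : #(H'.neighborFinset u) < #(H.neighborFinset u) := by
      refine card_lt_card ((ssubset_iff_of_subset ?_).2 ⟨v, ?_, ?_⟩)
      · intro x hx
        rw [SimpleGraph.mem_neighborFinset] at hx ⊢
        exact hx.1
      · rw [SimpleGraph.mem_neighborFinset]
        exact ((hmemN u).1 hu).symm
      · rw [SimpleGraph.mem_neighborFinset]
        exact fun h => h.2.2 rfl
    rw [H.card_neighborFinset_eq_degree] at h4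
    rw [card_univ, Fintype.card_fin] at h1
    rw [hS] at h2
    simp only [hLdef]
    omega
  have hLne : ∀ u ∈ N, (L u).Nonempty := fun u hu => card_pos.1 <| by
    have := hLcard u hu
    have := hdeg u
    omega
  have hSL : ∀ u ∈ N, Disjoint (S u) (L u) := fun u _ =>
    disjoint_sdiff.mono_left subset_union_left
  have hw0 : ∀ u, 0 ≤ max 0 (1 - 6 / (H.degree u : ℝ)) := fun u => le_max_left _ _
  have hweight : ∀ u (k : ℝ), 0 < k → k ≤ H.degree u →
      1 - 6 / k ≤ max 0 (1 - 6 / (H.degree u : ℝ)) := by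
    intro u k hk hku
    refine le_max_of_le_right ?_
    gcongr
  obtain ⟨c, f, hc, hf, hfinj, hfc⟩ : ∃ c f : V → Fin (M + 6), (∀ u ∈ N, c u ∈ L u) ∧
      (∀ u ∈ N, f u ∈ S u) ∧ Set.InjOn f N ∧ ∀ u ∈ N, ∀ w ∈ N, f u ≠ c w := by
    by_cases h4 : #N = 4
    · refine exists_local_coloring_of_card_eq_four N S L (fun u _ => hS u) hLne hSL h4 ?_
      by_contra! hcon
      have hhalf : ∀ u ∈ N, (1 / 2 : ℝ) ≤ max 0 (1 - 6 / (H.degree u : ℝ)) := by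
        intro u hu
        have h1 := hcon u hu
        have h2 := hLcard u hu
        have := hweight u 12 (by norm_num) (by exact_mod_cast (by omega : 12 ≤ H.degree u))
        linarith
      have := card_nsmul_le_sum N _ _ hhalf
      rw [← hNcard, h4] at hvw
      rw [h4] at this
      norm_num at this hvw
      linarith
    · refine exists_local_coloring_of_few_short N S L (fun u _ => hS u) hLne hSL
        (hNcard ▸ hv5) ?_
      set B := {u ∈ N | #(L u) < #N} with hB
      have hBN : B ⊆ N := filter_subset _ _
      have hBc := card_le_card hBN
      rcases (by omega : #N ≤ 3 ∨ #N = 5) with h3 | h5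
      · omega
      · by_contra! hcon
        have hthird : ∀ u ∈ B, (1 / 3 : ℝ) ≤ max 0 (1 - 6 / (H.degree u : ℝ)) := by
          intro u hu
          obtain ⟨huN, h1⟩ := mem_filter.1 hu
          have h2 := hLcard u huN
          have := hweight u 9 (by norm_num) (by exact_mod_cast (by omega : 9 ≤ H.degree u))
          linarith
        have h1 := card_nsmul_le_sum B _ _ hthird
        have h2 := sum_le_sum_of_subset_of_nonneg hBN fun u _ _ => hw0 u
        have h3 : (3 : ℝ) ≤ #B := by exact_mod_cast (by omega : 3 ≤ #B)
        rw [← hNcard, h5] at hvw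
        rw [nsmul_eq_mul] at h1
        norm_num at hvw
        linarith
  obtain ⟨T, hcT, hTf, hT⟩ : ∃ T, N.image c ⊆ T ∧ T ⊆ univ \ N.image f ∧ #T = 6 := by
    refine exists_subsuperset_card_eq ?_ ?_ ?_
    · intro x hx
      obtain ⟨u, hu, rfl⟩ := mem_image.1 hx
      refine mem_sdiff.2 ⟨mem_univ _, fun h => ?_⟩
      obtain ⟨w, hw, hwu⟩ := mem_image.1 h
      exact hfc w hw u hu hwu
    · have := card_image_le (s := N) (f := c)
      omega
    · have h1 := le_card_sdiff (N.image f) univ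
      have h2 := card_image_le (s := N) (f := f)
      rw [card_univ, Fintype.card_fin] at h1
      omega
  have hcL : ∀ u ∈ N, c u ∉ S u ∧ ∀ x, H'.Adj u x → c u ≠ φ u x := by
    intro u hu
    have h := (mem_sdiff.1 (hc u hu)).2
    refine ⟨fun h' => h (mem_union_left _ h'), fun x hx h' => h (mem_union_right _ ?_)⟩
    exact mem_image.2 ⟨x, (H'.mem_neighborFinset u x).2 hx, h'.symm⟩
  have hcT' : ∀ u ∈ N, c u ∈ T := fun u hu => hcT (mem_image_of_mem c hu)
  have hfT : ∀ u ∈ N, f u ∉ T := fun u hu h =>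
    (mem_sdiff.1 (hTf h)).2 (mem_image_of_mem f hu)
  have hH' : ∀ x y, x ≠ v → y ≠ v → H.Adj x y → H'.Adj x y := fun x y hx hy h => ⟨h, hx, hy⟩
  refine ⟨fun x y => if x = v then f y else if y = v then c x else φ x y,
    fun x => if x = v then T else S x, ?_, ?_, ?_⟩
  · intro x
    dsimp only
    split_ifs
    exacts [hT, hS x]
  · intro x y hxy
    rcases eq_or_ne x v with rfl | hx
    · have hy : y ≠ x := hxy.ne'
      have hyN := (hmemN y).2 hxy
      simpa [hy] using ⟨hf y hyN, hfT y hyN⟩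
    · rcases eq_or_ne y v with rfl | hy
      · have hxN := (hmemN x).2 hxy.symm
        simpa [hx] using ⟨hcT' x hxN, (hcL x hxN).1⟩
      · simpa [hx, hy] using hφS x y (hH' x y hx hy hxy)
  · intro x y z hxy hxz h
    rcases eq_or_ne x v with rfl | hx
    · simp only [if_true] at h
      exact hfinj ((hmemN y).2 hxy) ((hmemN z).2 hxz) h
    · simp only [hx, if_false] at h
      rcases eq_or_ne y v with rfl | hy
      · rcases eq_or_ne z y with rfl | hz
        · rfl
        · simp only [if_true, hz, if_false] at h
          exact ((hcL x ((hmemN x).2 hxy.symm)).2 z (hH' x z hx hz hxz) h).elim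
      · rcases eq_or_ne z v with rfl | hz
        · simp only [if_true, hy, if_false] at h
          exact ((hcL x ((hmemN x).2 hxz.symm)).2 y (hH' x y hx hy hxy) h.symm).elim
        · simp only [hy, hz, if_false] at h
          exact hφ x y z (hH' x y hx hy hxy) (hH' x z hx hz hxz) h

theorem isIncidenceColoring_of_injective {V : Type*} {G : SimpleGraph V} {n : ℕ}
    {φ : V → V → Fin n}
    (hout : ∀ v u x, G.Adj v u → G.Adj v x → φ v u = φ v x → u = x)
    (hpath : ∀ v u x, G.Adj v u → G.Adj u x → φ v u ≠ φ u x) : IsIncidenceColoring G φ := by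
  intro v u w x hvu hwx hne h hφ
  have hvw : v ≠ w := by
    rintro rfl
    exact hne (by rw [hout v u x hvu hwx hφ])
  rcases h with h | h | h | h
  · exact hvw h
  · rcases Sym2.eq_iff.1 h with ⟨h1, -⟩ | ⟨-, rfl⟩
    · exact hvw h1
    · exact hpath v u x hvu hwx hφ
  · rcases Sym2.eq_iff.1 h with ⟨-, rfl⟩ | ⟨h1, -⟩
    · exact hpath v w x hvu hwx hφ
    · exact hvu.ne h1
  · rcases Sym2.eq_iff.1 h with ⟨h1, -⟩ | ⟨rfl, -⟩
    · exact hvw h1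
    · exact hpath w v u hwx hvu hφ.symm

open Finset in
/-- Label the incidences at each vertex injectively so that as many edges as possible have their two
incidences labelled alike; then two consecutive incidences with the same label end in such an
edge. -/
theorem exists_labelling {V C : Type*} [Fintype V] [Fintype C] [Nonempty C]
    (G : SimpleGraph V) [DecidableRel G.Adj] (hdeg : ∀ v, G.degree v ≤ Fintype.card C) :
    ∃ l : V → V → C, (∀ v u x, G.Adj v u → G.Adj v x → l v u = l v x → u = x) ∧
      ∀ v u x, G.Adj v u → G.Adj u x → l v u = l u x → l x u = l u x := by
  classical
  let P : Type _ := {l : V → V → C // ∀ v u x, G.Adj v u → G.Adj v x → l v u = l v x → u = x}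
  have : Nonempty P := by
    have h : ∀ v, ∃ f : V → C, (∀ u ∈ G.neighborFinset v, f u ∈ (univ : Finset C)) ∧
        Set.InjOn f (G.neighborFinset v) := fun v =>
      exists_injOn_choice (G.neighborFinset v) (fun _ => univ) fun _ _ => hdeg v
    choose f _ hf using h
    exact ⟨⟨f, fun v u x hu hx => hf v (by simpa using hu) (by simpa using hx)⟩⟩
  let sym : P → Finset (V × V) := fun l => {p | G.Adj p.1 p.2 ∧ l.1 p.1 p.2 = l.1 p.2 p.1}
  obtain ⟨l, hl⟩ := Finite.exists_max fun l : P => #(sym l)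
  refine ⟨l.1, l.2, fun v u x hvu hux hlab => ?_⟩
  by_contra hsym
  have hxv : x ≠ v := by
    rintro rfl
    exact hsym hlab
  let l' : V → V → C := fun a b => if a = u then l.1 u (Equiv.swap v x b) else l.1 a b
  have hl' : ∀ a b y, G.Adj a b → G.Adj a y → l' a b = l' a y → b = y := by
    intro a b y hb hy h
    by_cases ha : a = u
    · subst ha
      have hadj : ∀ b, G.Adj a b → G.Adj a (Equiv.swap v x b) := by
        intro b hb
        rw [Equiv.swap_apply_def]
        split_ifs
        exacts [hux, hvu.symm, hb]
      simp only [l', if_true] at h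
      exact (Equiv.swap v x).injective (l.2 a _ _ (hadj b hb) (hadj y hy) h)
    · simp only [l', ha, if_false] at h
      exact l.2 a b y hb hy h
  have hkeep : ∀ b, G.Adj u b → l.1 u b = l.1 b u → b ≠ v ∧ b ≠ x := by
    intro b hb h
    constructor
    · rintro rfl
      exact hxv (l.2 u x b hux hb (hlab ▸ h.symm))
    · rintro rfl
      exact hsym h.symm
  refine (hl ⟨l', hl'⟩).not_gt (card_lt_card ((ssubset_iff_of_subset ?_).2 ⟨(v, u), ?_, ?_⟩))
  · rintro ⟨a, b⟩ hab
    simp only [sym, mem_filter, mem_univ, true_and] at hab ⊢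
    refine ⟨hab.1, ?_⟩
    by_cases ha : a = u
    · subst ha
      obtain ⟨h1, h2⟩ := hkeep b hab.1 hab.2
      simp [l', hab.1.ne', Equiv.swap_apply_of_ne_of_ne h1 h2, hab.2]
    · by_cases hb : b = u
      · subst hb
        obtain ⟨h1, h2⟩ := hkeep a hab.1.symm hab.2.symm
        simp [l', ha, Equiv.swap_apply_of_ne_of_ne h1 h2, hab.2]
      · simp [l', ha, hb, hab.2]
  · simp [sym, l', hvu, hvu.ne, hlab]
  · simp only [sym, mem_filter, mem_univ, true_and, not_and]
    intro _ h
    exact hxv (l.2 u x v hux hvu.symm (hlab ▸ h))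

/-- Twice the maximum degree many colors suffice (Brualdi and Massey). -/
theorem exists_incidenceColoring_of_two_mul_le {V : Type*} [Fintype V] (G : SimpleGraph V)
    [DecidableRel G.Adj] {d n : ℕ} (hdeg : ∀ v, G.degree v ≤ d) (hd : 0 < d) (hn : 2 * d ≤ n) :
    ∃ φ : V → V → Fin n, IsIncidenceColoring G φ := by
  classical
  have : NeZero d := ⟨hd.ne'⟩
  obtain ⟨l, hinj, hlab⟩ := exists_labelling (C := Fin d) G (by simpa using hdeg)
  let e := Fintype.equivFin V
  let b : V → V → Bool := fun v u =>
    if l v u = l u v then decide (e v < e u)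
    else decide (∃ x, G.Adj u x ∧ l u x = l v u ∧ e x < e u)
  obtain ⟨ι⟩ : Nonempty (Fin d × Bool ↪ Fin n) :=
    Function.Embedding.nonempty_of_card_le (by simp; omega)
  refine ⟨fun v u => ι (l v u, b v u), isIncidenceColoring_of_injective ?_ ?_⟩
  · intro v u x hu hx h
    exact hinj v u x hu hx (Prod.ext_iff.1 (ι.injective h)).1
  · intro v u x hvu hux h
    obtain ⟨h1, h2⟩ := Prod.ext_iff.1 (ι.injective h)
    dsimp only at h1 h2
    have hs := hlab v u x hvu hux h1
    have hne : e u ≠ e x := fun h => hux.ne (e.injective h)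
    have hbux : b u x = decide (e u < e x) := by simp [b, hs]
    by_cases hxv : x = v
    · subst hxv
      have hbvu : b x u = decide (e x < e u) := by simp [b, hs]
      rw [hbux, hbvu, decide_eq_decide] at h2
      rcases lt_or_gt_of_ne hne with h | h
      · exact absurd (h2.2 h) h.asymm
      · exact absurd (h2.1 h) h.asymm
    · have hns : l v u ≠ l u v := fun h => hxv (hinj u x v hux hvu.symm (h1 ▸ h))
      have hbvu : b v u = decide (e x < e u) := by
        simp only [b, hns, if_false, decide_eq_decide]
        constructor
        · rintro ⟨y, hy, hly, hlt⟩
          rwa [hinj u x y hux hy (h1 ▸ hly.symm)]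
        · exact fun h => ⟨x, hux, h1.symm, h⟩
      rw [hbux, hbvu, decide_eq_decide] at h2
      rcases lt_or_gt_of_ne hne with h | h
      · exact absurd (h2.2 h) h.asymm
      · exact absurd (h2.1 h) h.asymm

theorem incidence_chromatic_mad_lt_six {V : Type*} [Fintype V] (G : SimpleGraph V)
    [DecidableRel G.Adj] (hmad : MadLT G 6) (hΔ : 12 ≤ G.maxDegree ∨ G.maxDegree ≤ 6) :
    incChromaticNumber G ≤ G.maxDegree + 6 := by
  classical
  refine Nat.sInf_le ?_
  rcases hΔ with hΔ | hΔ
  · obtain ⟨φ, S, -, hφS, hφ⟩ := exists_coloring_with_palettes hΔ G hmad G.degree_le_maxDegree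
    refine ⟨φ, isIncidenceColoring_of_injective hφ fun v u x hvu hux h => ?_⟩
    exact (hφS u x hux).2 (h ▸ (hφS v u hvu).1)
  · rcases Nat.eq_zero_or_pos G.maxDegree with h0 | h0
    · refine ⟨fun _ _ => 0, fun v u w x hvu => ?_⟩
      have h1 := G.degree_le_maxDegree v
      have h2 := (G.degree_pos_iff_exists_adj v).2 ⟨u, hvu⟩
      omega
    · exact exists_incidenceColoring_of_two_mul_le G G.degree_le_maxDegree h0 (by omega)
end
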